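/- For every ω > 0 and every a > 0 there exist positive constants B₀ and C₀ such that for all B > B₀, all m ∈ ℤ, and every eigenfunction ψ of Q_m(B) with eigenvalue λ ≤ Θ₀ + ω·B^{−1/3}: ∫_{ℝ²₊} e^{2a|ρ|}·(|ψ|² + |∂_τψ|² + B^{−1/3}·|∂_ρψ|²) dτ dρ ≤ C₀·‖ψ‖². -/

import Mathlib

noncomputable section
open MeasureTheory Real Filter Set Topology

/-- The de Gennes energy `λ₁^𝒢(ξ)`. -/
def deGennes (ξ : ℝ) : ℝ :=
  sInf { q : ℝ | ∃ u : ℝ → ℂ, ContDiff ℝ 1 u ∧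
    IntegrableOn (fun t => ‖u t‖ ^ 2) (Ioi 0) ∧
    IntegrableOn (fun t => ‖deriv u t‖ ^ 2 + (t + ξ) ^ 2 * ‖u t‖ ^ 2) (Ioi 0) ∧
    0 < (∫ t in Ioi (0:ℝ), ‖u t‖ ^ 2) ∧
    q = (∫ t in Ioi (0:ℝ), (‖deriv u t‖ ^ 2 + (t + ξ) ^ 2 * ‖u t‖ ^ 2)) /
        ∫ t in Ioi (0:ℝ), ‖u t‖ ^ 2 }

/-- `Θ₀`, the infimum of the de Gennes energy. -/
def Theta0 : ℝ := ⨅ ξ : ℝ, deGennes ξ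

/-- The half plane `ℝ²₊ = {(τ, ρ) : τ > 0}`. -/
def halfPlane : Set (ℝ × ℝ) := Ioi (0:ℝ) ×ˢ (univ : Set ℝ)

/-- The potential of the effective operator `Q_m(B)`. -/
def qPot (B : ℝ) (m : ℤ) (p : ℝ × ℝ) : ℝ :=
  (p.1 + ((m : ℝ) - B / 2) / Real.sqrt B + B ^ (-(1:ℝ)/6) * p.2 ^ 2 / 2) ^ 2

/-- The integrand of the quadratic form `q_m`. -/
def qIntegrand (B : ℝ) (m : ℤ) (ψ : ℝ × ℝ → ℂ) (p : ℝ × ℝ) : ℝ :=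
  ‖fderiv ℝ ψ p (1, 0)‖ ^ 2 + qPot B m p * ‖ψ p‖ ^ 2
    + B ^ (-(1:ℝ)/3) * ‖fderiv ℝ ψ p (0, 1)‖ ^ 2

/-- The quadratic form `q_m[ψ]`. -/
def qForm (B : ℝ) (m : ℤ) (ψ : ℝ × ℝ → ℂ) : ℝ :=
  ∫ p in halfPlane, qIntegrand B m ψ p

/-- Membership in the form domain of `q_m`. -/
def InFormDomain (B : ℝ) (m : ℤ) (ψ : ℝ × ℝ → ℂ) : Prop :=
  ContDiff ℝ 1 ψ ∧ IntegrableOn (fun p => ‖ψ p‖ ^ 2) halfPlane ∧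
    IntegrableOn (qIntegrand B m ψ) halfPlane

/-- The rescaled momentum `δ̃₁ = ((m - B/2)/√B - ξ₀)·B^{1/6}`. -/
def delta1 (B : ℝ) (m : ℤ) (ξ₀ : ℝ) : ℝ :=
  (((m : ℝ) - B / 2) / Real.sqrt B - ξ₀) * B ^ ((1:ℝ)/6)

/-- Second derivative in the `τ` direction. -/
def d2τ (ψ : ℝ × ℝ → ℂ) (p : ℝ × ℝ) : ℂ :=
  fderiv ℝ (fun q => fderiv ℝ ψ q ((1:ℝ), (0:ℝ))) p (1, 0)

/-- Second derivative in the `ρ` direction. -/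
def d2ρ (ψ : ℝ × ℝ → ℂ) (p : ℝ × ℝ) : ℂ :=
  fderiv ℝ (fun q => fderiv ℝ ψ q ((0:ℝ), (1:ℝ))) p (0, 1)

/-- An eigenfunction of the model operator `Q_m(B)` on the half plane, with Neumann
boundary condition at `τ = 0`, eigenvalue `lam`, which is nonzero, smooth up to the
boundary, and lies in `L²` together with its first derivatives. -/
def IsQEigenfunction (B : ℝ) (m : ℤ) (lam : ℝ) (ψ : ℝ × ℝ → ℂ) : Prop :=
  ContDiff ℝ (⊤ : ℕ∞) ψ ∧
  IntegrableOn (fun p => ‖ψ p‖ ^ 2) halfPlane ∧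
  IntegrableOn (fun p => ‖fderiv ℝ ψ p ((1:ℝ), (0:ℝ))‖ ^ 2) halfPlane ∧
  IntegrableOn (fun p => ‖fderiv ℝ ψ p ((0:ℝ), (1:ℝ))‖ ^ 2) halfPlane ∧
  0 < (∫ p in halfPlane, ‖ψ p‖ ^ 2) ∧
  (∀ p ∈ halfPlane,
    -d2τ ψ p - ((B ^ (-(1:ℝ)/3) : ℝ) : ℂ) * d2ρ ψ p + ((qPot B m p : ℝ) : ℂ) * ψ p
      = (lam : ℂ) * ψ p) ∧
  (∀ ρ : ℝ, fderiv ℝ ψ ((0:ℝ), ρ) ((1:ℝ), (0:ℝ)) = 0)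


/-- integrand -/
def kInt (q x s : ℝ) : ℝ := s ^ q * Real.exp (-2 * x * s - s ^ 2)

/-- parabolic cylinder type integral -/
def KK (q x : ℝ) : ℝ := ∫ s in Ioi (0:ℝ), kInt q x s

theorem kInt_pos (q x s : ℝ) (hs : 0 < s) : 0 < kInt q x s :=
  mul_pos (rpow_pos_of_pos hs q) (exp_pos _)

theorem kInt_bound (q x s R : ℝ) (hs : 0 < s) (hx : |x| ≤ R) :
    kInt q x s ≤ Real.exp (2 * R ^ 2) * (s ^ q * Real.exp (-(1/2) * s ^ 2)) := by
  unfold kInt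
  have h1 : Real.exp (-2 * x * s - s ^ 2) ≤ Real.exp (2 * R ^ 2) * Real.exp (-(1/2) * s ^ 2) := by
    rw [← Real.exp_add]
    apply Real.exp_le_exp.2
    have : x ^ 2 ≤ R ^ 2 := by
      rw [← sq_abs x]; gcongr
    nlinarith [sq_nonneg (2 * x + s)]
  have h2 : 0 < s ^ q := rpow_pos_of_pos hs q
  calc _ ≤ s ^ q * (Real.exp (2 * R ^ 2) * Real.exp (-(1/2) * s ^ 2)) := by gcongr
    _ = _ := by ring

theorem kInt_meas (q x : ℝ) : Measurable (kInt q x) := by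
  unfold kInt; fun_prop

theorem kBound_integrable (q R : ℝ) (hq : -1 < q) : IntegrableOn
    (fun s => Real.exp (2 * R ^ 2) * (s ^ q * Real.exp (-(1/2) * s ^ 2))) (Ioi (0:ℝ)) :=
  (integrableOn_rpow_mul_exp_neg_mul_sq (by norm_num : (0:ℝ) < 1/2) hq).const_mul _

theorem kInt_integrable (q x : ℝ) (hq : -1 < q) : IntegrableOn (kInt q x) (Ioi (0:ℝ)) := by
  refine Integrable.mono' (kBound_integrable q |x| hq) (kInt_meas q x).aestronglyMeasurable ?_
  filter_upwards [ae_restrict_mem measurableSet_Ioi] with s hs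
  rw [Real.norm_of_nonneg (kInt_pos q x s hs).le]
  exact kInt_bound q x s |x| hs le_rfl

theorem KK_pos (q x : ℝ) (hq : -1 < q) : 0 < KK q x := by
  unfold KK
  rw [setIntegral_pos_iff_support_of_nonneg_ae]
  · have : (Function.support (kInt q x) ∩ Ioi 0) = Ioi 0 := by
      apply inter_eq_right.2
      intro s hs
      exact (kInt_pos q x s hs).ne'
    rw [this]; simp
  · filter_upwards [ae_restrict_mem measurableSet_Ioi] with s hs
    exact (kInt_pos q x s hs).le
  · exact kInt_integrable q x hq

theorem KK_hasDerivAt (q x : ℝ) (hq : -1 < q) : HasDerivAt (KK q) (-2 * KK (q + 1) x) x := by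
  have := (hasDerivAt_integral_of_dominated_loc_of_deriv_le (μ := volume.restrict (Ioi (0:ℝ)))
    (F := fun x s => kInt q x s) (F' := fun x s => -2 * kInt (q+1) x s) (x₀ := x)
    (s := Metric.ball x 1)
    (bound := fun s => 2 * (Real.exp (2 * (|x|+1) ^ 2) * (s ^ (q+1) * Real.exp (-(1/2) * s ^ 2))))
    (Metric.ball_mem_nhds x one_pos)
    (Eventually.of_forall fun y => (kInt_meas q y).aestronglyMeasurable)
    (kInt_integrable q x hq)
    ((kInt_meas (q+1) x).const_mul _).aestronglyMeasurable ?_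
    ((kBound_integrable (q+1) (|x|+1) (by linarith)).const_mul 2) ?_).2
  · unfold KK
    rwa [integral_const_mul] at this
  · filter_upwards [ae_restrict_mem measurableSet_Ioi] with s hs y hy
    rw [norm_mul, Real.norm_of_nonneg (kInt_pos _ y s hs).le]
    norm_num
    have hy' : |y| ≤ |x| + 1 := by
      rw [Metric.mem_ball, Real.dist_eq] at hy
      have := abs_sub_abs_le_abs_sub y x
      linarith
    have := kInt_bound (q+1) y s _ hs hy'
    norm_num at this
    exact this
  · filter_upwards [ae_restrict_mem measurableSet_Ioi] with s hs y hy
    have h1 : HasDerivAt (fun y : ℝ => -2 * y * s - s ^ 2) (-2 * s) y := by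
      have := (((hasDerivAt_id y).const_mul (-2)).mul_const s).sub_const (s^2)
      simpa using this
    have h2 := (h1.exp).const_mul (s ^ q)
    have h3 : -2 * kInt (q+1) y s = s ^ q * (Real.exp (-2 * y * s - s ^ 2) * (-2 * s)) := by
      unfold kInt
      rw [rpow_add hs, rpow_one]; ring
    rw [h3]
    exact h2

theorem KK_rec (p x : ℝ) (hp : 0 ≤ p) :
    p * KK (p - 1) x - 2 * x * KK p x - 2 * KK (p + 1) x = - (0:ℝ) ^ p := by
  have hderiv : ∀ s ∈ Ioi (0:ℝ), HasDerivAt (kInt p x)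
      (p * kInt (p-1) x s - 2 * x * kInt p x s - 2 * kInt (p+1) x s) s := by
    intro s hs
    have hs : 0 < s := hs
    have h1 : HasDerivAt (fun s : ℝ => -2 * x * s - s ^ 2) (-2 * x - 2 * s) s := by
      have := ((hasDerivAt_id' s).const_mul (-2 * x)).sub (hasDerivAt_pow 2 s)
      refine HasDerivAt.congr_deriv this ?_
      norm_num
    have h2 := (Real.hasDerivAt_rpow_const (x := s) (p := p) (Or.inl hs.ne')).mul h1.exp
    refine HasDerivAt.congr_deriv h2 ?_
    unfold kInt
    rw [rpow_add hs, rpow_one]; ring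
  have i0 : IntegrableOn (fun s => p * kInt (p-1) x s) (Ioi (0:ℝ)) := by
    rcases hp.eq_or_lt with rfl | hp
    · simp
    · exact (kInt_integrable (p-1) x (by linarith)).const_mul p
  have i1 : IntegrableOn (fun s => 2 * x * kInt p x s) (Ioi (0:ℝ)) :=
    (kInt_integrable p x (by linarith)).const_mul _
  have i2 : IntegrableOn (fun s => 2 * kInt (p+1) x s) (Ioi (0:ℝ)) :=
    (kInt_integrable (p+1) x (by linarith)).const_mul _
  have ht : Tendsto (kInt p x) atTop (𝓝 0) := by
    have hb := (rpow_mul_exp_neg_mul_sq_isLittleO_exp_neg (b := 1/2) (by norm_num) p)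
    have hz : Tendsto (fun s : ℝ => Real.exp (-(1/2) * s)) atTop (𝓝 0) := by
      apply Real.tendsto_exp_atBot.comp
      exact tendsto_id.const_mul_atTop_of_neg (by norm_num)
    have hz2 := hb.isBigO.trans_tendsto hz
    have hz3 := hz2.const_mul (Real.exp (2 * |x| ^ 2))
    rw [mul_zero] at hz3
    refine tendsto_of_tendsto_of_tendsto_of_le_of_le' tendsto_const_nhds hz3 ?_ ?_
    · filter_upwards [Ioi_mem_atTop 0] with s hs using (kInt_pos _ _ _ hs).le
    · filter_upwards [Ioi_mem_atTop 0] with s hs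
      exact kInt_bound p x s |x| hs le_rfl
  have hc : ContinuousWithinAt (kInt p x) (Ici 0) 0 := by
    apply Continuous.continuousWithinAt
    unfold kInt
    exact (Real.continuous_rpow_const hp).mul (by fun_prop)
  have := integral_Ioi_of_hasDerivAt_of_tendsto hc hderiv ((i0.sub i1).sub i2) ht
  rw [integral_sub, integral_sub, integral_const_mul, integral_const_mul, integral_const_mul] at this
  · unfold KK
    rw [this]; simp [kInt]
  · exact i0
  · exact i1
  · exact i0.sub i1
  · exact i2

theorem KK_continuousOn (f : ℝ → ℝ) (hf : Continuous f) (h0 : ∀ x ∈ Icc (-1:ℝ) 0, 0 ≤ f x)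
    (h2 : ∀ x ∈ Icc (-1:ℝ) 0, f x ≤ 2) :
    ContinuousOn (fun x => KK (f x) x) (Icc (-1:ℝ) 0) := by
  unfold KK
  refine continuousOn_of_dominated (bound := fun s =>
    Real.exp (2 * (1:ℝ) ^ 2) * (s ^ (0:ℝ) * Real.exp (-(1/2) * s ^ 2)) +
    Real.exp (2 * (1:ℝ) ^ 2) * (s ^ (2:ℝ) * Real.exp (-(1/2) * s ^ 2)))
    (fun x _ => (kInt_meas _ _).aestronglyMeasurable) ?_
    ((kBound_integrable 0 1 (by norm_num)).add (kBound_integrable 2 1 (by norm_num))) ?_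
  · intro x hx
    filter_upwards [ae_restrict_mem measurableSet_Ioi] with s hs
    have hs : 0 < s := hs
    rw [Real.norm_of_nonneg (kInt_pos _ x s hs).le]
    have hx1 : |x| ≤ 1 := by rw [abs_le]; constructor <;> linarith [hx.1, hx.2]
    refine (kInt_bound _ x s 1 hs hx1).trans ?_
    rw [← mul_add, ← add_mul]
    have : s ^ f x ≤ s ^ (0:ℝ) + s ^ (2:ℝ) := by
      rcases le_total s 1 with h | h
      · have := rpow_le_rpow_of_exponent_ge hs h (h0 x hx)
        have := rpow_pos_of_pos hs (2:ℝ)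
        exact le_add_of_le_of_nonneg (by assumption) this.le
      · have := rpow_le_rpow_of_exponent_le h (h2 x hx)
        have := rpow_pos_of_pos hs (0:ℝ)
        exact le_add_of_nonneg_of_le this.le (by assumption)
    gcongr
  · filter_upwards [ae_restrict_mem measurableSet_Ioi] with s hs
    have hs : 0 < s := hs
    apply Continuous.continuousOn
    unfold kInt
    exact (Continuous.rpow continuous_const hf (fun x => Or.inl hs.ne')).mul (by fun_prop)

/-- the shooting argument -/
theorem exists_zero : ∃ x : ℝ, -1 < x ∧ x < 0 ∧
    ((1 - x^2)/2 + x^2) * KK ((1 - x^2)/2) x + x * KK ((1-x^2)/2 + 1) x = 0 := by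
  have hc : ContinuousOn (fun x : ℝ => ((1 - x^2)/2 + x^2) * KK ((1 - x^2)/2) x
      + x * KK ((1-x^2)/2 + 1) x) (Icc (-1:ℝ) 0) := by
    apply ContinuousOn.add
    · apply ContinuousOn.mul (by fun_prop)
      apply KK_continuousOn (fun x => (1-x^2)/2) (by fun_prop)
      · intro x hx; nlinarith [hx.1, hx.2]
      · intro x hx; nlinarith [hx.1, hx.2]
    · apply ContinuousOn.mul (by fun_prop)
      apply KK_continuousOn (fun x => (1-x^2)/2+1) (by fun_prop)
      · intro x hx; nlinarith [hx.1, hx.2]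
      · intro x hx; nlinarith [hx.1, hx.2]
  have hm1 : KK 0 (-1) - KK 1 (-1) = -1/2 := by
    have := KK_rec 0 (-1) le_rfl
    norm_num at this
    linarith
  have h0 : 0 < KK (1/2) 0 := KK_pos _ _ (by norm_num)
  have := intermediate_value_Ioo (by norm_num : (-1:ℝ) ≤ 0) hc
  have hmem : (0:ℝ) ∈ Ioo (((1 - (-1:ℝ)^2)/2 + (-1:ℝ)^2) * KK ((1 - (-1:ℝ)^2)/2) (-1)
      + (-1:ℝ) * KK ((1-(-1:ℝ)^2)/2 + 1) (-1)) (((1 - (0:ℝ)^2)/2 + (0:ℝ)^2) * KK ((1 - (0:ℝ)^2)/2) 0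
      + (0:ℝ) * KK ((1-(0:ℝ)^2)/2 + 1) 0) := by
    constructor
    · norm_num
      linarith
    · norm_num
      norm_num at h0
      exact h0
  obtain ⟨x, hx, hx0⟩ := this hmem
  exact ⟨x, hx.1, hx.2, hx0⟩

theorem deriv_package : ∃ (x0 p : ℝ) (F ϕ : ℝ → ℝ), -1 < x0 ∧ x0 < 0 ∧ 0 < p ∧
    F x0 = 0 ∧ (∀ x, 0 < ϕ x) ∧ (∀ x, x < F x) ∧
    (∀ x, HasDerivAt F (F x ^ 2 - x ^ 2 + x0 ^ 2) x) ∧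
    (∀ x, HasDerivAt ϕ (-(F x * ϕ x)) x) ∧
    (∀ x, ϕ x = Real.exp (-x^2/2) * KK (p-1) x) ∧
    (∀ x, F x * ϕ x = Real.exp (-x^2/2) * (x * KK (p-1) x + 2 * KK p x)) := by
  obtain ⟨x0, h1, h2, h3⟩ := exists_zero
  set p := (1 - x0^2)/2 with hp
  have hp0 : 0 < p := by nlinarith
  have hK : ∀ x, 0 < KK (p-1) x := fun x => KK_pos _ _ (by linarith)
  have hK1 : ∀ x, 0 < KK p x := fun x => KK_pos _ _ (by linarith)
  have hrec : ∀ x, p * KK (p-1) x = 2 * x * KK p x + 2 * KK (p+1) x := by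
    intro x
    have := KK_rec p x hp0.le
    rw [zero_rpow hp0.ne'] at this
    linarith
  have hd : ∀ x, HasDerivAt (KK (p-1)) (-2 * KK p x) x := by
    intro x
    have := KK_hasDerivAt (p-1) x (by linarith)
    rwa [sub_add_cancel] at this
  have hd1 : ∀ x, HasDerivAt (KK p) (-2 * KK (p+1) x) x :=
    fun x => KK_hasDerivAt p x (by linarith)
  refine ⟨x0, p, fun x => x + 2 * KK p x / KK (p-1) x,
    fun x => Real.exp (-x^2/2) * KK (p-1) x, h1, h2, hp0, ?_, ?_, ?_, ?_, ?_, ?_, ?_⟩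
  · have := hrec x0
    have hk := hK x0
    field_simp
    have h4 : p * (x0 * KK (p-1) x0 + 2 * KK p x0) = 0 := by
      linear_combination x0 * this + 2 * h3
    rcases mul_eq_zero.1 h4 with h | h
    · exact absurd h hp0.ne'
    · linarith
  · intro x
    exact mul_pos (exp_pos _) (hK x)
  · intro x
    have := div_pos (mul_pos two_pos (hK1 x)) (hK x)
    simp only
    linarith
  · intro x
    have hk := (hK x).ne'
    have := (hasDerivAt_id' x).add (((hd1 x).const_mul 2).div (hd x) hk)
    refine HasDerivAt.congr_deriv this ?_
    have h5 : KK (p+1) x = (p * KK (p-1) x - 2 * x * KK p x)/2 := by linarith [hrec x]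
    rw [h5]
    have h6 : x0^2 = 1 - 2 * p := by rw [hp]; ring
    rw [h6]
    field_simp
    ring
  · intro x
    have hk := (hK x).ne'
    have he : HasDerivAt (fun x : ℝ => Real.exp (-x^2/2)) (Real.exp (-x^2/2) * (-x)) x := by
      apply HasDerivAt.exp
      refine HasDerivAt.congr_deriv ((hasDerivAt_pow 2 x).neg.div_const 2) ?_
      norm_num
      ring
    refine HasDerivAt.congr_deriv (he.mul (hd x)) ?_
    field_simp
    ring
  · intro x; rfl
  · intro x
    have hk := (hK x).ne'
    field_simp

theorem F_lower (x0 : ℝ) (F ϕ : ℝ → ℝ) (h0 : -1 < x0) (h1 : x0 < 0)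
    (hF0 : F x0 = 0) (hϕ : ∀ x, 0 < ϕ x) (hFx : ∀ x, x < F x)
    (hF : ∀ x, HasDerivAt F (F x ^ 2 - x ^ 2 + x0 ^ 2) x)
    (hϕ' : ∀ x, HasDerivAt ϕ (-(F x * ϕ x)) x) :
    ∃ c : ℝ, 0 < c ∧ c ≤ 1 ∧ ∀ x, c * min 1 ((x - x0) ^ 2) ≤ F x := by
  have hFc : Continuous F := continuous_iff_continuousAt.2 fun x => (hF x).continuousAt
  have hϕc : Continuous ϕ := continuous_iff_continuousAt.2 fun x => (hϕ' x).continuousAt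
  have hY : ∀ x, HasDerivAt (fun x => F x * ϕ x) ((x0^2 - x^2) * ϕ x) x := by
    intro x
    refine HasDerivAt.congr_deriv ((hF x).mul (hϕ' x)) ?_
    ring
  have hYc : Continuous (fun x => F x * ϕ x) := hFc.mul hϕc
  -- region 1
  obtain ⟨a1, ha1, hm⟩ := (isCompact_Icc (a := x0 - 1) (b := 0)).exists_isMinOn
    ⟨0, by constructor <;> linarith⟩ hϕc.continuousOn
  obtain ⟨a2, ha2, hM⟩ := (isCompact_Icc (a := x0 - 1) (b := 0)).exists_isMaxOn
    ⟨0, by constructor <;> linarith⟩ hϕc.continuousOn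
  set m := ϕ a1 with hmdef
  set M := ϕ a2 with hMdef
  have hmp : 0 < m := hϕ a1
  have hMp : 0 < M := hϕ a2
  have hm' : ∀ x ∈ Icc (x0-1) 0, m ≤ ϕ x := fun x hx => hm hx
  have hM' : ∀ x ∈ Icc (x0-1) 0, ϕ x ≤ M := fun x hx => hM hx
  have hZ : ∀ x, HasDerivAt (fun x => F x * ϕ x - (m * (-x0) / 2) * (x - x0)^2)
      ((x0^2 - x^2) * ϕ x - m * (-x0) * (x - x0)) x := by
    intro x
    have h := (((hasDerivAt_id' x).sub_const x0).pow 2).const_mul (m * (-x0) / 2)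
    refine HasDerivAt.congr_deriv ((hY x).sub h) ?_
    norm_num
    ring
  have hZc : Continuous (fun x => F x * ϕ x - (m * (-x0) / 2) * (x - x0)^2) := by fun_prop
  have hZpos : ∀ x ∈ Icc (x0-1) 0, 0 ≤ F x * ϕ x - (m * (-x0) / 2) * (x - x0)^2 := by
    intro x hx
    rcases le_total x0 x with h | h
    · have hmono : MonotoneOn (fun x => F x * ϕ x - (m * (-x0) / 2) * (x - x0)^2) (Icc x0 0) := by
        apply monotoneOn_of_deriv_nonneg (convex_Icc _ _) hZc.continuousOn
        · exact fun x _ => (hZ x).differentiableAt.differentiableWithinAt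
        · intro y hy
          rw [interior_Icc] at hy
          rw [(hZ y).deriv]
          have := hm' y ⟨by linarith [hy.1], hy.2.le⟩
          have e1 : (x0^2 - y^2) * ϕ y ≥ ((y - x0) * (-x0)) * m := by
            have : x0^2 - y^2 ≥ (y - x0) * (-x0) := by nlinarith [hy.1, hy.2]
            have : 0 ≤ (y - x0) * (-x0) := mul_nonneg (by linarith [hy.1]) (by linarith)
            apply mul_le_mul <;> first | assumption | linarith
          linarith
      have := hmono (left_mem_Icc.2 h1.le) ⟨h, hx.2⟩ h
      simp only [hF0, sub_self] at this
      linarith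
    · have hmono : AntitoneOn (fun x => F x * ϕ x - (m * (-x0) / 2) * (x - x0)^2)
          (Icc (x0-1) x0) := by
        apply antitoneOn_of_deriv_nonpos (convex_Icc _ _) hZc.continuousOn
        · exact fun x _ => (hZ x).differentiableAt.differentiableWithinAt
        · intro y hy
          rw [interior_Icc] at hy
          rw [(hZ y).deriv]
          have := hm' y ⟨by linarith [hy.1], by linarith [hy.2]⟩
          have e1 : (y^2 - x0^2) * ϕ y ≥ ((x0 - y) * (-x0)) * m := by
            have : y^2 - x0^2 ≥ (x0 - y) * (-x0) := by nlinarith [hy.1, hy.2]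
            have : 0 ≤ (x0 - y) * (-x0) := mul_nonneg (by linarith [hy.2]) (by linarith)
            apply mul_le_mul <;> first | assumption | linarith
          linarith
      have := hmono ⟨hx.1, h⟩ (right_mem_Icc.2 (by linarith)) h
      simp only [hF0, sub_self] at this
      linarith
  have R1 : ∀ x ∈ Icc (x0-1) 0, (m * (-x0) / (2 * M)) * (x - x0)^2 ≤ F x := by
    intro x hx
    have a := hZpos x hx
    have b := hM' x hx
    have hc : 0 ≤ (m * (-x0) / 2) * (x-x0)^2 := by
      have := mul_nonneg hmp.le (by linarith : 0 ≤ -x0)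
      positivity
    have hFn : 0 ≤ F x := by
      by_contra hneg
      push Not at hneg
      have := mul_neg_of_neg_of_pos hneg (hϕ x)
      linarith
    have d : (m * (-x0) / 2) * (x-x0)^2 ≤ F x * M := by nlinarith
    have e : (m * (-x0) / (2 * M)) * (x - x0)^2 = ((m * (-x0) / 2) * (x-x0)^2) / M := by
      field_simp
    rw [e, div_le_iff₀ hMp]
    exact d
  -- region 2
  obtain ⟨a3, ha3, hm3⟩ := (isCompact_Icc (a := (0:ℝ)) (b := 1)).exists_isMinOn
    ⟨0, by constructor <;> linarith⟩ hFc.continuousOn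
  have hFa3 : 0 < F a3 := lt_of_le_of_lt ha3.1 (hFx a3)
  have R2 : ∀ x, 0 ≤ x → min 1 (F a3) ≤ F x := by
    intro x hx
    rcases le_total x 1 with h | h
    · exact (min_le_right _ _).trans (hm3 ⟨hx, h⟩)
    · exact (min_le_left _ _).trans (h.trans (hFx x).le)
  -- region 3
  have hleft : ∀ x, x ≤ x0 → 0 ≤ F x := by
    intro x hx
    have hmono : AntitoneOn (fun x => F x * ϕ x) (Iic x0) := by
      apply antitoneOn_of_deriv_nonpos (convex_Iic _) hYc.continuousOn
      · exact fun x _ => (hY x).differentiableAt.differentiableWithinAt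
      · intro y hy
        rw [interior_Iic] at hy
        rw [(hY y).deriv]
        have hy : y < x0 := hy
        apply mul_nonpos_of_nonpos_of_nonneg _ (hϕ y).le
        nlinarith
    have := hmono hx (self_mem_Iic) hx
    simp only [hF0, zero_mul] at this
    by_contra hneg
    push Not at hneg
    have := mul_neg_of_neg_of_pos hneg (hϕ x)
    linarith
  have hFm : 0 < F (x0 - 1) := by
    have := R1 (x0-1) ⟨le_rfl, by linarith⟩
    have h : 0 < m * (-x0) / (2 * M) := div_pos (mul_pos hmp (by linarith)) (by linarith)
    have e : (x0 - 1 - x0)^2 = 1 := by ring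
    rw [e, mul_one] at this
    exact lt_of_lt_of_le h this
  have R3 : ∀ x, x ≤ x0 - 1 → min 1 (F (x0-1)) ≤ F x := by
    intro x hx
    by_contra hlt
    push Not at hlt
    have hlt1 := lt_min_iff.1 hlt
    have := image_le_of_deriv_right_lt_deriv_boundary (f := F)
      (f' := fun x => F x ^ 2 - x ^ 2 + x0 ^ 2)
      (a := x) (b := x0 - 1) (B := fun _ => F x) (B' := fun _ => 0) hFc.continuousOn
      (fun y _ => (hF y).hasDerivWithinAt) le_rfl (fun y => hasDerivAt_const y _) ?_
      (right_mem_Icc.2 hx)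
    · linarith [hlt1.2]
    · intro y hy hy2
      have : F y < 1 := by rw [hy2]; exact hlt1.1
      have h3 := hleft y (by linarith [hy.2])
      nlinarith [hy.2]
  refine ⟨min (min (m * (-x0) / (2 * M)) (min 1 (F a3))) (min 1 (F (x0-1))), ?_, ?_, ?_⟩
  · have h : 0 < m * (-x0) / (2 * M) := div_pos (mul_pos hmp (by linarith)) (by linarith)
    simp only [lt_min_iff]
    exact ⟨⟨h, one_pos, hFa3⟩, one_pos, hFm⟩
  · exact (min_le_right _ _).trans (min_le_left _ _)
  · intro x
    set c1 := m * (-x0) / (2 * M) with hc1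
    set c2 := min 1 (F a3)
    set c3 := min 1 (F (x0-1))
    have h : 0 < c1 := div_pos (mul_pos hmp (by linarith)) (by linarith)
    have h2 : 0 < c2 := lt_min one_pos hFa3
    have h3 : 0 < c3 := lt_min one_pos hFm
    have hcp : 0 ≤ min (min c1 c2) c3 := (lt_min (lt_min h h2) h3).le
    have q1 : min 1 ((x-x0)^2) ≤ 1 := min_le_left _ _
    have q2 : min 1 ((x-x0)^2) ≤ (x-x0)^2 := min_le_right _ _
    have q0 : 0 ≤ min 1 ((x-x0)^2) := le_min zero_le_one (sq_nonneg _)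
    rcases le_total x (x0-1) with hx | hx
    · calc _ ≤ min (min c1 c2) c3 * 1 := by gcongr
        _ ≤ c3 := by rw [mul_one]; exact min_le_right _ _
        _ ≤ _ := R3 x hx
    · rcases le_total 0 x with hx0 | hx0
      · calc _ ≤ min (min c1 c2) c3 * 1 := by gcongr
          _ ≤ c2 := by rw [mul_one]; exact (min_le_left _ _).trans (min_le_right _ _)
          _ ≤ _ := R2 x hx0
      · calc _ ≤ min (min c1 c2) c3 * (x-x0)^2 := by gcongr
          _ ≤ c1 * (x-x0)^2 := by
            gcongr
            exact (min_le_left _ _).trans (min_le_left _ _)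
          _ ≤ _ := R1 x ⟨hx, hx0⟩

theorem KK_anti (q x y : ℝ) (hq : -1 < q) (h : x ≤ y) : KK q y ≤ KK q x := by
  unfold KK
  apply setIntegral_mono_on (kInt_integrable q y hq) (kInt_integrable q x hq) measurableSet_Ioi
  intro s hs
  have hs : 0 < s := hs
  unfold kInt
  have := rpow_pos_of_pos hs q
  have h2 : -2 * y * s - s^2 ≤ -2 * x * s - s^2 := by nlinarith
  gcongr

theorem Theta0_le (x0 p : ℝ) (F ϕ : ℝ → ℝ) (hp : 0 < p)
    (hF0 : F x0 = 0) (hϕ : ∀ x, 0 < ϕ x)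
    (hF : ∀ x, HasDerivAt F (F x ^ 2 - x ^ 2 + x0 ^ 2) x)
    (hϕ' : ∀ x, HasDerivAt ϕ (-(F x * ϕ x)) x)
    (e1 : ∀ x, ϕ x = Real.exp (-x^2/2) * KK (p-1) x)
    (e2 : ∀ x, F x * ϕ x = Real.exp (-x^2/2) * (x * KK (p-1) x + 2 * KK p x)) :
    Theta0 ≤ x0 ^ 2 := by
  have hFc : Continuous F := continuous_iff_continuousAt.2 fun x => (hF x).continuousAt
  have hϕc : Continuous ϕ := continuous_iff_continuousAt.2 fun x => (hϕ' x).continuousAt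
  set A := KK (p-1) x0
  set D := KK p x0
  have b0 : Integrable (fun x : ℝ => (1 + x^2) * Real.exp (-x^2)) := by
    have h1 := integrable_exp_neg_mul_sq (b := 1) one_pos
    have h2 := integrable_rpow_mul_exp_neg_mul_sq (b := 1) one_pos (s := 2) (by norm_num)
    refine (h1.add h2).congr (Eventually.of_forall fun x => ?_)
    simp only [Pi.add_apply, rpow_two]
    ring_nf
  have b1 : IntegrableOn (fun t : ℝ => (1 + (t+x0)^2) * Real.exp (-(t+x0)^2)) (Ioi 0) :=
    (b0.comp_add_right x0).integrableOn
  have hexp : ∀ x : ℝ, Real.exp (-x^2/2) ^ 2 = Real.exp (-x^2) := by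
    intro x
    rw [← Real.exp_nat_mul]
    congr 1
    push_cast
    ring
  have k1 : ∀ x, x0 ≤ x → KK (p-1) x ^ 2 ≤ A^2 := by
    intro x hx
    have := KK_anti (p-1) x0 x (by linarith) hx
    have := KK_pos (p-1) x (by linarith)
    gcongr
  have k2 : ∀ x, x0 ≤ x → KK p x ^ 2 ≤ D^2 := by
    intro x hx
    have := KK_anti p x0 x (by linarith) hx
    have := KK_pos p x (by linarith)
    gcongr
  have i1 : IntegrableOn (fun t => ϕ (t+x0) ^ 2) (Ioi 0) := by
    refine Integrable.mono' (b1.const_mul (A^2)) (by fun_prop) ?_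
    filter_upwards [ae_restrict_mem measurableSet_Ioi] with t ht
    have ht : 0 < t := ht
    rw [Real.norm_of_nonneg (sq_nonneg _), e1, mul_pow, hexp]
    have := k1 (t+x0) (by linarith)
    have h0 := exp_pos (-(t+x0)^2)
    calc _ ≤ Real.exp (-(t+x0)^2) * A^2 := by gcongr
      _ ≤ Real.exp (-(t+x0)^2) * A^2 * (1 + (t+x0)^2) := by
        apply le_mul_of_one_le_right (by positivity)
        nlinarith [sq_nonneg (t+x0)]
      _ = _ := by ring
  have i2 : IntegrableOn (fun t => (t+x0)^2 * ϕ (t+x0) ^ 2) (Ioi 0) := by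
    refine Integrable.mono' (b1.const_mul (A^2)) (by fun_prop) ?_
    filter_upwards [ae_restrict_mem measurableSet_Ioi] with t ht
    have ht : 0 < t := ht
    rw [Real.norm_of_nonneg (by positivity), e1, mul_pow, hexp]
    have := k1 (t+x0) (by linarith)
    have h0 := exp_pos (-(t+x0)^2)
    calc _ ≤ (t+x0)^2 * (Real.exp (-(t+x0)^2) * A^2) := by gcongr
      _ ≤ (1 + (t+x0)^2) * (Real.exp (-(t+x0)^2) * A^2) := by
        gcongr
        linarith
      _ = _ := by ring
  have i3 : IntegrableOn (fun t => (F (t+x0) * ϕ (t+x0)) ^ 2) (Ioi 0) := by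
    refine Integrable.mono' (b1.const_mul (2 * A^2 + 8 * D^2)) (by fun_prop) ?_
    filter_upwards [ae_restrict_mem measurableSet_Ioi] with t ht
    have ht : 0 < t := ht
    rw [Real.norm_of_nonneg (sq_nonneg _), e2, mul_pow, hexp]
    have q1 := k1 (t+x0) (by linarith)
    have q2 := k2 (t+x0) (by linarith)
    have h0 := exp_pos (-(t+x0)^2)
    have : ((t+x0) * KK (p-1) (t+x0) + 2 * KK p (t+x0))^2 ≤ (2 * A^2 + 8 * D^2) * (1 + (t+x0)^2) := by
      have r1 : ((t+x0) * KK (p-1) (t+x0) + 2 * KK p (t+x0))^2 ≤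
        2 * ((t+x0)^2 * KK (p-1) (t+x0)^2) + 8 * KK p (t+x0)^2 := by
        nlinarith [sq_nonneg ((t+x0) * KK (p-1) (t+x0) - 2 * KK p (t+x0))]
      have r2 : (t+x0)^2 * KK (p-1) (t+x0)^2 ≤ (t+x0)^2 * A^2 := by gcongr
      have r3 : 0 ≤ (t+x0)^2 * D^2 := by positivity
      nlinarith [sq_nonneg A]
    calc _ ≤ Real.exp (-(t+x0)^2) * ((2 * A^2 + 8 * D^2) * (1 + (t+x0)^2)) := by gcongr
      _ = _ := by ring
  have hsh : ∀ {G : ℝ → ℝ} {G' : ℝ} {t : ℝ}, HasDerivAt G G' (t+x0) →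
      HasDerivAt (fun t => G (t+x0)) G' t := fun h => h.comp_add_const _ _
  have hd : ∀ t : ℝ, HasDerivAt (fun t => -(F (t+x0) * ϕ (t+x0)) * ϕ (t+x0))
      ((F (t+x0) * ϕ (t+x0))^2 + (t+x0)^2 * ϕ (t+x0)^2 - x0^2 * ϕ (t+x0)^2) t := by
    intro t
    refine HasDerivAt.congr_deriv
      (((hsh (hF (t+x0))).mul (hsh (hϕ' (t+x0)))).neg.mul (hsh (hϕ' (t+x0)))) ?_
    simp only [Pi.neg_apply, Pi.mul_apply]
    ring
  have i4 : IntegrableOn (fun t => (F (t+x0) * ϕ (t+x0))^2 + (t+x0)^2 * ϕ (t+x0)^2) (Ioi 0) :=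
    i3.add i2
  have i5 : IntegrableOn (fun t => x0^2 * ϕ (t+x0)^2) (Ioi 0) := i1.const_mul _
  have i6 : IntegrableOn (fun t => -(F (t+x0) * ϕ (t+x0)) * ϕ (t+x0)) (Ioi 0) := by
    refine Integrable.mono' (i3.add i1) (by fun_prop) (Eventually.of_forall fun t => ?_)
    rw [Real.norm_eq_abs, abs_le]
    simp only [Pi.add_apply]
    constructor <;> nlinarith [sq_nonneg (F (t+x0) * ϕ (t+x0) + ϕ (t+x0)),
      sq_nonneg (F (t+x0) * ϕ (t+x0) - ϕ (t+x0))]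
  have hlim := tendsto_zero_of_hasDerivAt_of_integrableOn_Ioi (a := 0) (fun t _ => hd t)
    (i4.sub i5) i6
  have hint := integral_Ioi_of_hasDerivAt_of_tendsto' (a := 0) (fun t _ => hd t) (i4.sub i5) hlim
  rw [integral_sub i4 i5, integral_const_mul] at hint
  simp only [zero_add, hF0, zero_mul, neg_zero, sub_zero] at hint
  have hpos : 0 < ∫ t in Ioi (0:ℝ), ϕ (t+x0)^2 := by
    rw [setIntegral_pos_iff_support_of_nonneg_ae]
    · have : (Function.support (fun t => ϕ (t+x0)^2) ∩ Ioi 0) = Ioi 0 := by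
        apply inter_eq_right.2
        intro s hs
        exact (pow_pos (hϕ _) 2).ne'
      rw [this]; simp
    · exact Eventually.of_forall fun t => sq_nonneg _
    · exact i1
  have hdu : ∀ t : ℝ, HasDerivAt (fun t : ℝ => ((ϕ (t+x0) : ℝ) : ℂ))
      ((-(F (t+x0) * ϕ (t+x0)) : ℝ) : ℂ) t := fun t => (hsh (hϕ' (t+x0))).ofReal_comp
  have hdeu : deriv (fun t : ℝ => ((ϕ (t+x0) : ℝ) : ℂ)) =
      fun t => ((-(F (t+x0) * ϕ (t+x0)) : ℝ) : ℂ) := funext fun t => (hdu t).deriv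
  have hle1 : deGennes x0 ≤ x0^2 := by
    apply csInf_le
    · refine ⟨0, ?_⟩
      rintro q ⟨u, -, -, -, hu, rfl⟩
      apply div_nonneg _ hu.le
      apply integral_nonneg
      intro t
      positivity
    · refine ⟨fun t => ((ϕ (t+x0) : ℝ) : ℂ), ?_, ?_, ?_, ?_, ?_⟩
      · rw [contDiff_one_iff_deriv]
        refine ⟨fun t => (hdu t).differentiableAt, ?_⟩
        rw [hdeu]
        fun_prop
      · simpa only [Complex.norm_real, Real.norm_eq_abs, sq_abs] using i1
      · rw [hdeu]
        simpa only [Complex.norm_real, Real.norm_eq_abs, sq_abs, neg_sq] using i4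
      · simpa only [Complex.norm_real, Real.norm_eq_abs, sq_abs] using hpos
      · rw [hdeu]
        simp only [Complex.norm_real, Real.norm_eq_abs, sq_abs, neg_sq]
        rw [eq_div_iff hpos.ne']
        linarith
  refine le_trans (ciInf_le ⟨0, ?_⟩ x0) hle1
  rintro _ ⟨ξ, rfl⟩
  apply Real.sInf_nonneg
  rintro q ⟨u, -, -, -, hu, rfl⟩
  apply div_nonneg _ hu.le
  apply integral_nonneg
  intro t
  positivity

/-- one-dimensional package -/
theorem deGennes_package : ∃ (x0 Λ c : ℝ) (F : ℝ → ℝ), 0 < c ∧ c ≤ 1 ∧ Theta0 ≤ Λ ∧ Λ ≤ 1 ∧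
    (∀ x, HasDerivAt F (F x ^ 2 - x ^ 2 + Λ) x) ∧ (∀ x, c * min 1 ((x - x0) ^ 2) ≤ F x) := by
  obtain ⟨x0, p, F, ϕ, h1, h2, h3, h4, h5, h6, h7, h8, h9, h10⟩ := deriv_package
  obtain ⟨c, hc, hc1, hcF⟩ := F_lower x0 F ϕ h1 h2 h4 h5 h6 h7 h8
  exact ⟨x0, x0^2, c, F, hc, hc1, Theta0_le x0 p F ϕ h3 h4 h5 h7 h8 h9 h10, by nlinarith, h7, hcF⟩

theorem slice1_cs {X : ℝ × ℝ → ℝ} (h : HasCompactSupport X) (ρ : ℝ) :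
    HasCompactSupport (fun t => X (t, ρ)) := by
  refine HasCompactSupport.intro (K := Prod.fst '' tsupport X) (h.image continuous_fst) ?_
  intro t ht
  by_contra hne
  exact ht ⟨(t, ρ), subset_tsupport X hne, rfl⟩

theorem slice2_cs {X : ℝ × ℝ → ℝ} (h : HasCompactSupport X) (τ : ℝ) :
    HasCompactSupport (fun t => X (τ, t)) := by
  refine HasCompactSupport.intro (K := Prod.snd '' tsupport X) (h.image continuous_snd) ?_
  intro t ht
  by_contra hne
  exact ht ⟨(τ, t), subset_tsupport X hne, rfl⟩

theorem hasDerivAt_slice1 {X : ℝ × ℝ → ℝ} {p : ℝ × ℝ} (h : DifferentiableAt ℝ X p) :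
    HasDerivAt (fun t => X (t, p.2)) (fderiv ℝ X p (1, 0)) p.1 := by
  have h1 : HasDerivAt (fun t : ℝ => (t, p.2)) ((1:ℝ), (0:ℝ)) p.1 :=
    (hasDerivAt_id' p.1).prodMk (hasDerivAt_const _ _)
  exact HasFDerivAt.comp_hasDerivAt (x := p.1) (l := X) (f := fun t : ℝ => (t, p.2))
    h.hasFDerivAt h1

theorem hasDerivAt_slice2 {X : ℝ × ℝ → ℝ} {p : ℝ × ℝ} (h : DifferentiableAt ℝ X p) :
    HasDerivAt (fun t => X (p.1, t)) (fderiv ℝ X p (0, 1)) p.2 := by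
  have h1 : HasDerivAt (fun t : ℝ => (p.1, t)) ((0:ℝ), (1:ℝ)) p.2 :=
    (hasDerivAt_const _ _).prodMk (hasDerivAt_id' p.2)
  exact HasFDerivAt.comp_hasDerivAt (x := p.2) (l := X) (f := fun t : ℝ => (p.1, t))
    h.hasFDerivAt h1

theorem fderiv_integrable {X : ℝ × ℝ → ℝ} (hX : ContDiff ℝ 1 X) (h : HasCompactSupport X)
    (v : ℝ × ℝ) : Integrable (fun p => fderiv ℝ X p v) := by
  apply Continuous.integrable_of_hasCompactSupport
  · exact (hX.continuous_fderiv one_ne_zero).clm_apply continuous_const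
  · exact h.fderiv_apply (𝕜 := ℝ) v

theorem halfPlane_measure : (volume : Measure (ℝ × ℝ)).restrict halfPlane =
    ((volume : Measure ℝ).restrict (Ioi 0)).prod (volume : Measure ℝ) := by
  unfold halfPlane
  rw [Measure.volume_eq_prod, ← Measure.prod_restrict, Measure.restrict_univ]

theorem halfPlane_meas : MeasurableSet halfPlane := measurableSet_Ioi.prod MeasurableSet.univ

theorem div_le {X Y : ℝ × ℝ → ℝ} (hX : ContDiff ℝ 1 X) (hY : ContDiff ℝ 1 Y)
    (cX : HasCompactSupport X) (cY : HasCompactSupport Y) (h0 : ∀ ρ, 0 ≤ X (0, ρ)) :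
    ∫ p in halfPlane, (fderiv ℝ X p (1, 0) + fderiv ℝ Y p (0, 1)) ≤ 0 := by
  have iX := (fderiv_integrable hX cX (1, 0)).integrableOn (s := halfPlane)
  have iY := (fderiv_integrable hY cY (0, 1)).integrableOn (s := halfPlane)
  rw [integral_add iX iY]
  have e1 : ∫ p in halfPlane, fderiv ℝ X p (1, 0) = ∫ ρ : ℝ, -X (0, ρ) := by
    unfold IntegrableOn at iX
    rw [halfPlane_measure] at iX ⊢
    rw [integral_prod_symm _ iX]
    congr 1
    ext ρ
    have hs : ContDiff ℝ 1 (fun t => X (t, ρ)) := by fun_prop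
    rw [← (slice1_cs cX ρ).integral_Ioi_deriv_eq hs 0]
    congr 1
    ext t
    exact (hasDerivAt_slice1 (p := (t, ρ)) (hX.differentiable one_ne_zero _)).deriv.symm
  have e2 : ∫ p in halfPlane, fderiv ℝ Y p (0, 1) = 0 := by
    unfold IntegrableOn at iY
    rw [halfPlane_measure] at iY ⊢
    rw [integral_prod _ iY]
    have : ∀ t : ℝ, ∫ ρ : ℝ, fderiv ℝ Y (t, ρ) (0, 1) = 0 := by
      intro t
      have hs : ContDiff ℝ 1 (fun s => Y (t, s)) := by fun_prop
      have hc := slice2_cs cY t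
      have hd : ∀ ρ, HasDerivAt (fun s => Y (t, s)) (fderiv ℝ Y (t, ρ) (0, 1)) ρ := fun ρ =>
        hasDerivAt_slice2 (p := (t, ρ)) (hY.differentiable one_ne_zero _)
      apply integral_eq_zero_of_hasDerivAt_of_integrable hd
      · have : (fun ρ => fderiv ℝ Y (t, ρ) (0, 1)) = deriv (fun s => Y (t, s)) :=
          funext fun ρ => (hd ρ).deriv.symm
        rw [this]
        exact (hs.continuous_deriv le_rfl).integrable_of_hasCompactSupport hc.deriv
      · exact hs.continuous.integrable_of_hasCompactSupport hc
    simp [this]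
  rw [e1, e2, add_zero, integral_neg]
  have := integral_nonneg (μ := volume) (f := fun ρ => X (0, ρ)) h0
  linarith

theorem arctan_abs_le (x : ℝ) : |Real.arctan x| ≤ 8/5 := by
  have h1 := Real.arctan_lt_pi_div_two x
  have h2 := Real.neg_pi_div_two_lt_arctan x
  have h3 := Real.pi_lt_d2
  rw [abs_le]
  constructor <;> linarith

theorem G_package : ∃ (x0 Λ c : ℝ) (G Gx : ℝ → ℝ → ℝ), 0 < c ∧ Theta0 ≤ Λ ∧ Λ ≤ 1 ∧
    ContDiff ℝ 1 (fun q : ℝ × ℝ => G q.1 q.2) ∧ (∀ ξ, 0 ≤ G ξ ξ) ∧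
    (∀ ξ x, HasDerivAt (G ξ) (Gx ξ x) x) ∧
    (∀ ξ x, Λ + c * min 1 ((ξ - x0) ^ 2) ≤ Gx ξ x - G ξ x ^ 2 + x ^ 2) := by
  obtain ⟨x0, Λ, c, F, hc, hc1, hT, hΛ, hF, hFl⟩ := deGennes_package
  have hFc : Continuous F := continuous_iff_continuousAt.2 fun x => (hF x).continuousAt
  have hFn : ∀ x, 0 ≤ F x := fun x =>
    le_trans (mul_nonneg hc.le (le_min zero_le_one (sq_nonneg _))) (hFl x)
  have hF1 : ContDiff ℝ 1 F := by
    rw [contDiff_one_iff_deriv]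
    refine ⟨fun t => (hF t).differentiableAt, ?_⟩
    rw [show deriv F = fun x => F x ^ 2 - x ^ 2 + Λ from funext fun x => (hF x).deriv]
    fun_prop
  set κ := min (1/2) (2 * c) with hκ
  have hκp : 0 < κ := lt_min (by norm_num) (by linarith)
  have hκ1 : κ ≤ 1/2 := min_le_left _ _
  have hκ2 : κ ≤ 2 * c := min_le_right _ _
  refine ⟨x0, Λ, κ^2 * c / 200, fun ξ x => F x - (κ/50 * (F ξ / (1 + F ξ))) * (3 - Real.arctan (x - x0)),
    fun ξ x => (F x ^ 2 - x ^ 2 + Λ) + (κ/50 * (F ξ / (1 + F ξ))) * (1 / (1 + (x-x0)^2)),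
    by positivity, hT, hΛ, ?_, ?_, ?_, ?_⟩
  · have h1 : ContDiff ℝ 1 (fun q : ℝ × ℝ => F q.1 / (1 + F q.1)) := by
      apply ContDiff.div
      · fun_prop
      · fun_prop
      · intro q
        have := hFn q.1
        positivity
    have h2 : ContDiff ℝ 1 (fun q : ℝ × ℝ => Real.arctan (q.2 - x0)) :=
      Real.contDiff_arctan.comp (by fun_prop)
    fun_prop
  · intro ξ
    have h1 := arctan_abs_le (ξ - x0)
    rw [abs_le] at h1
    have h2 : F ξ / (1 + F ξ) ≤ F ξ := div_le_self (hFn ξ) (by linarith [hFn ξ])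
    have h3 : 0 ≤ F ξ / (1 + F ξ) := div_nonneg (hFn ξ) (by linarith [hFn ξ])
    simp only
    have h4 : κ/50 * (F ξ / (1 + F ξ)) ≤ F ξ / 100 := by nlinarith
    have h5 : 0 ≤ κ/50 * (F ξ / (1 + F ξ)) := by positivity
    nlinarith
  · intro ξ x
    have ha : HasDerivAt (fun x => Real.arctan (x - x0)) (1 / (1 + (x-x0)^2)) x :=
      (Real.hasDerivAt_arctan (x - x0)).comp_sub_const x x0
    refine HasDerivAt.congr_deriv ((hF x).sub
      ((ha.const_sub 3).const_mul (κ/50 * (F ξ / (1 + F ξ))))) ?_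
    ring
  · intro ξ x
    simp only
    set μ := κ/50 * (F ξ / (1 + F ξ)) with hμ
    set k := 3 - Real.arctan (x - x0) with hk
    have h1 := arctan_abs_le (x - x0)
    rw [abs_le] at h1
    have hk1 : 1 ≤ k := by linarith
    have hk5 : k ≤ 5 := by linarith
    have h3 : 0 ≤ F ξ / (1 + F ξ) := div_nonneg (hFn ξ) (by linarith [hFn ξ])
    have h4 : F ξ / (1 + F ξ) ≤ 1 := by
      rw [div_le_one (by linarith [hFn ξ])]; linarith
    have hμ0 : 0 ≤ μ := by positivity
    have hμ1 : μ ≤ κ/50 := by nlinarith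
    set m := min 1 ((ξ - x0)^2) with hm
    have hm0 : 0 ≤ m := le_min zero_le_one (sq_nonneg _)
    have hm1 : m ≤ 1 := min_le_left _ _
    have h5 : c * m / 2 ≤ F ξ / (1 + F ξ) := by
      rw [div_le_div_iff₀ (by norm_num) (by linarith [hFn ξ])]
      have := hFl ξ
      have h6 : c * m ≤ 1 := by nlinarith
      nlinarith [hFn ξ]
    have hμ2 : κ * c * m / 100 ≤ μ := by
      rw [hμ]; nlinarith
    have h7 : κ ≤ 1 / (1 + (x-x0)^2) + 2 * F x := by
      rcases le_total ((x-x0)^2) 1 with h | h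
      · have : 1/2 ≤ 1 / (1 + (x-x0)^2) := by
          apply one_div_le_one_div_of_le (by positivity); linarith
        linarith [hFn x]
      · have h8 := hFl x
        rw [min_eq_left h] at h8
        have : 0 ≤ 1 / (1 + (x-x0)^2) := by positivity
        linarith
    have h9 : F x ≤ F x * k := le_mul_of_one_le_right (hFn x) hk1
    have h10 : μ * k^2 ≤ κ / 2 := by
      have : k^2 ≤ 25 := by nlinarith
      nlinarith
    have h11 : κ/2 ≤ 1 / (1 + (x-x0)^2) + 2 * F x * k - μ * k^2 := by linarith
    have h12 : μ * (κ/2) ≤ μ * (1 / (1 + (x-x0)^2) + 2 * F x * k - μ * k^2) := by gcongr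
    have h13 : κ^2 * c / 200 * m ≤ μ * (κ/2) := by
      have := mul_le_mul_of_nonneg_right hμ2 (by positivity : 0 ≤ κ/2)
      linarith
    nlinarith

theorem h_package (c K : ℝ) (hc : 0 < c) (hK : 0 < K) : ∃ R e0 : ℝ, 0 < R ∧ 0 < e0 ∧
    ∀ ε s ρ : ℝ, 0 < ε → ε ^ 2 ≤ e0 →
      ε ^ 2 * K - (if |ρ| < R then ε^2 * (K + 11) else 0) ≤
      c * min 1 ((ε * s)^2) + ε ^ 2 * (Real.arctan s / (1 + ρ^2) + ρ * Real.arctan ρ / (1 + s^2)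
        - (Real.arctan ρ * Real.arctan s)^2) := by
  refine ⟨2 * (1 + (K+11)/c) * (K + 11), c / (K+11), by positivity, by positivity, ?_⟩
  intro ε s ρ hε hε2
  have a1 := arctan_abs_le s
  have a2 := arctan_abs_le ρ
  have b1 : (Real.arctan ρ * Real.arctan s)^2 ≤ 9 := by
    rw [mul_pow, ← sq_abs (Real.arctan ρ), ← sq_abs (Real.arctan s)]
    have : |Real.arctan ρ|^2 ≤ 3 := by nlinarith [abs_nonneg (Real.arctan ρ)]
    have : |Real.arctan s|^2 ≤ 3 := by nlinarith [abs_nonneg (Real.arctan s)]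
    nlinarith [sq_nonneg |Real.arctan ρ|, sq_nonneg |Real.arctan s|]
  have b2 : -2 ≤ Real.arctan s / (1 + ρ^2) := by
    rw [le_div_iff₀ (by positivity)]
    rw [abs_le] at a1
    nlinarith [sq_nonneg ρ]
  have b3 : ρ * Real.arctan ρ = |ρ| * Real.arctan |ρ| := by
    rcases le_total 0 ρ with h | h
    · rw [abs_of_nonneg h]
    · rw [abs_of_nonpos h, Real.arctan_neg]; ring
  have b4 : 0 ≤ Real.arctan |ρ| := Real.arctan_nonneg.2 (abs_nonneg _)
  have b5 : 0 ≤ ρ * Real.arctan ρ / (1 + s^2) := by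
    rw [b3]; positivity
  have b6 : 0 ≤ c * min 1 ((ε * s)^2) := mul_nonneg hc.le (le_min zero_le_one (sq_nonneg _))
  have he : 0 < ε ^ 2 := by positivity
  split_ifs with h
  · have : -11 ≤ Real.arctan s / (1 + ρ^2) + ρ * Real.arctan ρ / (1 + s^2)
        - (Real.arctan ρ * Real.arctan s)^2 := by linarith
    nlinarith
  · push Not at h
    rcases le_total ((K+11)/c) (s^2) with hs | hs
    · have h1 : ε^2 * (K+11) ≤ c * min 1 ((ε * s)^2) := by
        rw [mul_min_of_nonneg _ _ hc.le]
        apply le_min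
        · rw [le_div_iff₀ (by positivity)] at hε2
          linarith
        · rw [div_le_iff₀ hc] at hs
          rw [mul_pow]
          nlinarith
      have : -11 ≤ Real.arctan s / (1 + ρ^2) + ρ * Real.arctan ρ / (1 + s^2)
        - (Real.arctan ρ * Real.arctan s)^2 := by linarith
      nlinarith
    · have hQ : 0 < (K+11)/c := by positivity
      have h1 : 1 ≤ |ρ| := by
        refine le_trans ?_ h
        nlinarith
      have h2 : 1/2 ≤ Real.arctan |ρ| := by
        have := Real.arctan_strictMono.monotone h1
        rw [Real.arctan_one] at this
        linarith [Real.pi_gt_three]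
      have h3 : K + 11 ≤ ρ * Real.arctan ρ / (1 + s^2) := by
        rw [le_div_iff₀ (by positivity), b3]
        have : |ρ| * (1/2) ≤ |ρ| * Real.arctan |ρ| := by gcongr
        nlinarith
      have : K ≤ Real.arctan s / (1 + ρ^2) + ρ * Real.arctan ρ / (1 + s^2)
        - (Real.arctan ρ * Real.arctan s)^2 := by linarith
      nlinarith

theorem exists_cutoff : ∃ (χ : ℝ → ℝ) (D : ℝ), ContDiff ℝ 1 χ ∧ HasCompactSupport χ ∧ χ 0 = 1 ∧
    (∀ t, 0 ≤ χ t ∧ χ t ≤ 1) ∧ (∀ t, |deriv χ t| ≤ D) ∧ 0 ≤ D := by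
  have h1 : ContDiff ℝ 1 (fun t : ℝ => Real.smoothTransition (2 - t^2)) :=
    Real.smoothTransition.contDiff.comp (by fun_prop)
  have h2 : HasCompactSupport (fun t : ℝ => Real.smoothTransition (2 - t^2)) := by
    refine HasCompactSupport.intro (K := Icc (-2) 2) isCompact_Icc ?_
    intro t ht
    apply Real.smoothTransition.zero_of_nonpos
    by_contra hlt
    push Not at hlt
    exact ht ⟨by nlinarith, by nlinarith⟩
  obtain ⟨D, hD⟩ := (h2.deriv).exists_bound_of_continuous (h1.continuous_deriv le_rfl)
  refine ⟨_, D, h1, h2, ?_, fun t => ⟨Real.smoothTransition.nonneg _, Real.smoothTransition.le_one _⟩,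
    hD, (norm_nonneg _).trans (hD 0)⟩
  apply Real.smoothTransition.one_of_one_le
  norm_num

/-- the weight -/
def wgt (χ : ℝ → ℝ) (a r : ℝ) (p : ℝ × ℝ) : ℝ :=
  Real.cosh (a * p.2) / (1 + Real.cosh (a * p.2) / r) * (χ (p.1 / r^2) * χ (p.2 / r^2))

theorem wgt_props (χ : ℝ → ℝ) (D a r : ℝ) (hχ : ContDiff ℝ 1 χ) (hcs : HasCompactSupport χ)
    (h01 : ∀ t, 0 ≤ χ t ∧ χ t ≤ 1) (hD : ∀ t, |deriv χ t| ≤ D) (hr : 1 ≤ r) (ha : 0 < a) :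
    ContDiff ℝ 1 (wgt χ a r) ∧ HasCompactSupport (wgt χ a r) ∧
    (∀ p, wgt χ a r p ^ 2 ≤ Real.cosh (a * p.2) ^ 2) ∧
    (∀ p, (fderiv ℝ (wgt χ a r) p (1, 0))^2 ≤ 2 * D^2 / r^2) ∧
    (∀ p, (fderiv ℝ (wgt χ a r) p (0, 1))^2 ≤ 2 * a^2 * wgt χ a r p ^ 2 + 2 * D^2 / r^2) := by
  have hr0 : 0 < r := by linarith
  have hden : ∀ y : ℝ, 0 < 1 + Real.cosh y / r := fun y => by
    have := Real.cosh_pos y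
    positivity
  have hw1 : ContDiff ℝ 1 (fun p : ℝ × ℝ => Real.cosh (a * p.2) / (1 + Real.cosh (a * p.2) / r)) := by
    apply ContDiff.div
    · exact Real.contDiff_cosh.comp (by fun_prop)
    · exact contDiff_const.add ((Real.contDiff_cosh.comp (by fun_prop)).div_const _)
    · exact fun p => (hden _).ne'
  have hC : ContDiff ℝ 1 (wgt χ a r) := by
    unfold wgt
    exact hw1.mul (by fun_prop)
  have hle : ∀ y : ℝ, Real.cosh y / (1 + Real.cosh y / r) ≤ r := by
    intro y
    rw [div_le_iff₀ (hden y)]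
    have := Real.cosh_pos y
    have e : r * (1 + Real.cosh y / r) = r + Real.cosh y := by field_simp
    rw [e]; linarith
  have hle2 : ∀ y : ℝ, Real.cosh y / (1 + Real.cosh y / r) ≤ Real.cosh y := by
    intro y
    apply div_le_self (Real.cosh_pos y).le
    have : 0 ≤ Real.cosh y / r := div_nonneg (Real.cosh_pos y).le hr0.le
    linarith
  have hwpos : ∀ y : ℝ, 0 ≤ Real.cosh y / (1 + Real.cosh y / r) := fun y =>
    div_nonneg (Real.cosh_pos y).le (hden y).le
  refine ⟨hC, ?_, ?_, ?_, ?_⟩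
  · have hK : IsCompact ((fun t => r^2 * t) '' tsupport χ) := hcs.image (by fun_prop)
    refine HasCompactSupport.intro (hK.prod hK) ?_
    intro p hp
    have key : ∀ t, χ (t / r^2) ≠ 0 → t ∈ (fun t => r^2 * t) '' tsupport χ := by
      intro t ht
      refine ⟨t / r^2, subset_tsupport χ ht, ?_⟩
      simp only
      field_simp
    by_contra hne
    apply hp
    unfold wgt at hne
    have h2 := right_ne_zero_of_mul hne
    exact ⟨key _ (left_ne_zero_of_mul h2), key _ (right_ne_zero_of_mul h2)⟩
  · intro p
    unfold wgt
    have h1 := h01 (p.1 / r^2)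
    have h2 := h01 (p.2 / r^2)
    have h3 : χ (p.1 / r^2) * χ (p.2 / r^2) ≤ 1 := mul_le_one₀ h1.2 h2.1 h2.2
    have h4 : 0 ≤ χ (p.1 / r^2) * χ (p.2 / r^2) := mul_nonneg h1.1 h2.1
    have h5 := hwpos (a * p.2)
    apply pow_le_pow_left₀ (mul_nonneg h5 h4)
    exact (mul_le_of_le_one_right h5 h3).trans (hle2 _)
  · intro p
    have h1 := h01 (p.2 / r^2)
    have hχd : HasDerivAt (fun t => χ (t / r^2)) (deriv χ (p.1 / r^2) * (1 / r^2)) p.1 := by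
      have := (hχ.differentiable one_ne_zero (p.1 / r^2)).hasDerivAt
      exact this.comp p.1 ((hasDerivAt_id' p.1).div_const _)
    have hd : HasDerivAt (fun t => wgt χ a r (t, p.2))
      (Real.cosh (a * p.2) / (1 + Real.cosh (a * p.2) / r) *
        (deriv χ (p.1 / r^2) * (1 / r^2) * χ (p.2 / r^2))) p.1 :=
      (hχd.mul_const (χ (p.2 / r^2))).const_mul
        (Real.cosh (a * p.2) / (1 + Real.cosh (a * p.2) / r))
    have e := (hasDerivAt_slice1 (hC.differentiable one_ne_zero p)).unique hd
    rw [e]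
    have h3 := hwpos (a * p.2)
    have h4 := hle (a * p.2)
    have h5 := hD (p.1 / r^2)
    set w := Real.cosh (a * p.2) / (1 + Real.cosh (a * p.2) / r)
    have h6 : w^2 ≤ r^2 := by gcongr
    have h7 : (deriv χ (p.1 / r^2))^2 ≤ D^2 := by
      rw [← sq_abs]; gcongr
    have h8 : (χ (p.2 / r^2))^2 ≤ 1 := pow_le_one₀ h1.1 h1.2
    calc _ = w^2 * (deriv χ (p.1 / r^2))^2 * (χ (p.2 / r^2))^2 / r^4 := by field_simp
      _ ≤ r^2 * D^2 * 1 / r^4 := by gcongr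
      _ = D^2 / r^2 := by field_simp
      _ ≤ 2 * D^2 / r^2 := by
        gcongr
        nlinarith [sq_nonneg D]
  · intro p
    have h1 := h01 (p.1 / r^2)
    have h1' := h01 (p.2 / r^2)
    have hχd : HasDerivAt (fun t => χ (t / r^2)) (deriv χ (p.2 / r^2) * (1 / r^2)) p.2 := by
      have := (hχ.differentiable one_ne_zero (p.2 / r^2)).hasDerivAt
      exact this.comp p.2 ((hasDerivAt_id' p.2).div_const _)
    have hch : HasDerivAt (fun t => Real.cosh (a * t)) (Real.sinh (a * p.2) * a) p.2 := by
      have := ((hasDerivAt_id' p.2).const_mul a).cosh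
      simpa using this
    have hwd := hch.div ((hch.div_const r).const_add 1) (hden (a * p.2)).ne'
    have hd := hwd.mul (hχd.const_mul (χ (p.1 / r^2)))
    have e := (hasDerivAt_slice2 (hC.differentiable one_ne_zero p)).unique hd
    rw [e]
    have hws : (Real.sinh (a * p.2) * a * (1 + Real.cosh (a * p.2) / r) -
          Real.cosh (a * p.2) * (Real.sinh (a * p.2) * a / r)) / (1 + Real.cosh (a * p.2) / r) ^ 2
        = a * Real.sinh (a * p.2) / (1 + Real.cosh (a * p.2) / r) ^ 2 := by
      congr 1
      ring
    have hb : (a * Real.sinh (a * p.2) / (1 + Real.cosh (a * p.2) / r) ^ 2)^2 ≤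
        a^2 * (Real.cosh (a * p.2) / (1 + Real.cosh (a * p.2) / r))^2 := by
      have hdd := hden (a * p.2)
      have hd1 : 1 ≤ 1 + Real.cosh (a * p.2) / r := by
        have : 0 ≤ Real.cosh (a * p.2) / r := div_nonneg (Real.cosh_pos _).le hr0.le
        linarith
      have hsc : Real.sinh (a * p.2)^2 ≤ Real.cosh (a * p.2)^2 := by
        rw [Real.cosh_sq]; linarith
      set d := 1 + Real.cosh (a * p.2) / r
      calc _ = a^2 * (Real.sinh (a * p.2)^2 / d^4) := by
            field_simp
        _ ≤ a^2 * (Real.cosh (a * p.2)^2 / d^2) := by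
            have : d^2 ≤ d^4 := pow_le_pow_right₀ hd1 (by norm_num)
            gcongr
        _ = _ := by rw [div_pow]
    simp only [hws]
    have h3 := hwpos (a * p.2)
    have h4 := hle (a * p.2)
    have h5 := hD (p.2 / r^2)
    unfold wgt
    set w := Real.cosh (a * p.2) / (1 + Real.cosh (a * p.2) / r)
    set w' := a * Real.sinh (a * p.2) / (1 + Real.cosh (a * p.2) / r) ^ 2
    have h6 : w^2 ≤ r^2 := by gcongr
    have h7 : (deriv χ (p.2 / r^2))^2 ≤ D^2 := by
      rw [← sq_abs]; gcongr
    have h8 : (χ (p.1 / r^2))^2 ≤ 1 := pow_le_one₀ h1.1 h1.2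
    set x1 := χ (p.1 / r^2)
    set x2 := χ (p.2 / r^2)
    set d2 := deriv χ (p.2 / r^2)
    calc _ = (w' * (x1 * x2) + w * (x1 * (d2 * (1 / r^2))))^2 := rfl
      _ ≤ 2 * (w'^2 * (x1 * x2)^2) + 2 * (w^2 * d2^2 * x1^2 / r^4) := by
        have e : w^2 * d2^2 * x1^2 / r^4 = (w * (x1 * (d2 * (1 / r^2))))^2 := by field_simp
        rw [e, ← mul_pow]
        nlinarith [sq_nonneg (w' * (x1 * x2) - w * (x1 * (d2 * (1 / r^2))))]
      _ ≤ 2 * (a^2 * w^2 * (x1 * x2)^2) + 2 * (r^2 * D^2 * 1 / r^4) := by gcongr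
      _ = _ := by field_simp

theorem wgt_tendsto (χ : ℝ → ℝ) (a : ℝ) (hχ : Continuous χ) (h0 : χ 0 = 1) (p : ℝ × ℝ) :
    Tendsto (fun n : ℕ => wgt χ a ((n:ℝ) + 1) p) atTop (𝓝 (Real.cosh (a * p.2))) := by
  have hr : Tendsto (fun n : ℕ => (n:ℝ) + 1) atTop atTop :=
    tendsto_atTop_add_const_right _ _ tendsto_natCast_atTop_atTop
  have hr2 : Tendsto (fun n : ℕ => ((n:ℝ) + 1)^2) atTop atTop :=
    (tendsto_pow_atTop two_ne_zero).comp hr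
  have t1 : ∀ y : ℝ, Tendsto (fun n : ℕ => χ (y / ((n:ℝ) + 1)^2)) atTop (𝓝 1) := by
    intro y
    have h := (hχ.tendsto 0).comp ((tendsto_const_nhds (x := y)).div_atTop hr2)
    rw [h0] at h
    exact h
  have t2 : Tendsto (fun n : ℕ => 1 + Real.cosh (a * p.2) / ((n:ℝ) + 1)) atTop (𝓝 (1 + 0)) :=
    tendsto_const_nhds.add (tendsto_const_nhds.div_atTop hr)
  have t3 := ((tendsto_const_nhds (x := Real.cosh (a * p.2))).div t2 (by norm_num)).mul
    ((t1 p.1).mul (t1 p.2))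
  simpa [wgt] using t3

theorem core_int {P f X Y : ℝ × ℝ → ℝ} (E : ℝ) (hP : IntegrableOn P halfPlane)
    (hf : IntegrableOn (fun p => f p ^ 2) halfPlane)
    (hX : ContDiff ℝ 1 X) (hY : ContDiff ℝ 1 Y)
    (cX : HasCompactSupport X) (cY : HasCompactSupport Y) (h0 : ∀ ρ, 0 ≤ X (0, ρ))
    (hle : ∀ p ∈ halfPlane, P p ≤ (fderiv ℝ X p (1, 0) + fderiv ℝ Y p (0, 1)) + E * f p ^ 2) :
    ∫ p in halfPlane, P p ≤ E * ∫ p in halfPlane, f p ^ 2 := by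
  have iX := (fderiv_integrable hX cX (1, 0)).integrableOn (s := halfPlane)
  have iY := (fderiv_integrable hY cY (0, 1)).integrableOn (s := halfPlane)
  have h1 := setIntegral_mono_on hP ((iX.add iY).add (hf.const_mul E)) halfPlane_meas hle
  have h2 := div_le hX hY cX cY h0
  have h3 := integral_add (iX.add iY) (hf.const_mul E)
  simp only [Pi.add_apply] at h1 h3
  rw [h3, integral_const_mul] at h1
  linarith

set_option maxHeartbeats 1000000 in
theorem core (ε lam ω a η R Q : ℝ) (V f Φ g h : ℝ × ℝ → ℝ)
    (hε : 0 < ε) (hε1 : ε ≤ 1) (hω : 0 < ω) (hQ : 0 ≤ Q) (ha : 0 < a)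
    (hf : ContDiff ℝ (⊤ : ℕ∞) f) (fint : IntegrableOn (fun p => f p ^ 2) halfPlane)
    (pde : ∀ p ∈ halfPlane, fderiv ℝ (fun q => fderiv ℝ f q ((1:ℝ), (0:ℝ))) p (1, 0)
      + ε ^ 2 * fderiv ℝ (fun q => fderiv ℝ f q ((0:ℝ), (1:ℝ))) p (0, 1) = (V p - lam) * f p)
    (neu : ∀ ρ : ℝ, fderiv ℝ f ((0:ℝ), ρ) ((1:ℝ), (0:ℝ)) = 0)
    (hΦ : ContDiff ℝ 1 Φ) (cΦ : HasCompactSupport Φ)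
    (hΦ1 : ∀ p, (fderiv ℝ Φ p (1, 0))^2 + ε^2 * (fderiv ℝ Φ p (0, 1))^2 ≤
      2 * a^2 * ε^2 * Φ p ^ 2 + η)
    (hΦ2 : ∀ p, Φ p ^ 2 ≤ Real.cosh (a * p.2) ^ 2)
    (hg : ContDiff ℝ 1 g) (hh : ContDiff ℝ 1 h) (hg0 : ∀ ρ, 0 ≤ g (0, ρ))
    (coef : ∀ p ∈ halfPlane, ε^2 * (2 * a^2 + 1) - (if |p.2| < R then ε^2 * Q else 0) ≤
      V p - lam + fderiv ℝ g p (1, 0) - g p ^ 2 + ε^2 * (fderiv ℝ h p (0, 1) - h p ^ 2))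
    (hV : ∀ p, 0 ≤ V p) (hlam : lam ≤ 1 + ω) :
    ∫ p in halfPlane, Φ p ^ 2 * (f p ^ 2 + (fderiv ℝ f p (1, 0))^2 + ε^2 * (fderiv ℝ f p (0, 1))^2)
      ≤ ((3 + 2 * ω + 8 * a^2) * Q * Real.cosh (a * R)^2 +
        ((3 + 2 * ω + 8 * a^2) / ε^2 + 4) * η) * ∫ p in halfPlane, f p ^ 2 := by
  have hf1 : ContDiff ℝ 1 f := hf.of_le (by exact_mod_cast le_top)
  have hfτ : ContDiff ℝ 1 (fun q => fderiv ℝ f q ((1:ℝ), (0:ℝ))) :=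
    ((contDiff_infty.1 hf 2).fderiv_right (m := 1) (by norm_num)).clm_apply contDiff_const
  have hfρ : ContDiff ℝ 1 (fun q => fderiv ℝ f q ((0:ℝ), (1:ℝ))) :=
    ((contDiff_infty.1 hf 2).fderiv_right (m := 1) (by norm_num)).clm_apply contDiff_const
  set fτ := (fun q => fderiv ℝ f q ((1:ℝ), (0:ℝ))) with hfτdef
  set fρ := (fun q => fderiv ℝ f q ((0:ℝ), (1:ℝ))) with hfρdef
  have cf := hf1.continuous
  have cfτ := hfτ.continuous
  have cfρ := hfρ.continuous
  have ccΦ := hΦ.continuous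
  have cΦ2 : ∀ u : ℝ × ℝ → ℝ, HasCompactSupport (fun p => Φ p ^ 2 * u p) := by
    intro u
    refine HasCompactSupport.intro cΦ ?_
    intro p hp
    rw [image_eq_zero_of_notMem_tsupport hp]
    ring
  have cint : ∀ u : ℝ × ℝ → ℝ, Continuous u → IntegrableOn (fun p => Φ p ^ 2 * u p) halfPlane :=
    fun u hu => (((ccΦ.pow 2).mul hu).integrable_of_hasCompactSupport (cΦ2 u)).integrableOn
  -- vector fields
  have X2c : ContDiff ℝ 1 (fun p => Φ p ^ 2 * (f p * fτ p)) := (hΦ.pow 2).mul (hf1.mul hfτ)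
  have Y2c : ContDiff ℝ 1 (fun p => Φ p ^ 2 * (ε^2 * (f p * fρ p))) :=
    (hΦ.pow 2).mul (contDiff_const.mul (hf1.mul hfρ))
  have X1c : ContDiff ℝ 1 (fun p => Φ p ^ 2 * (f p * fτ p + g p * f p ^ 2)) :=
    (hΦ.pow 2).mul ((hf1.mul hfτ).add (hg.mul (hf1.pow 2)))
  have Y1c : ContDiff ℝ 1 (fun p => Φ p ^ 2 * (ε^2 * (f p * fρ p + h p * f p ^ 2))) :=
    (hΦ.pow 2).mul (contDiff_const.mul ((hf1.mul hfρ).add (hh.mul (hf1.pow 2))))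
  have s1 : ∀ {u : ℝ × ℝ → ℝ} (_ : ContDiff ℝ 1 u) (p : ℝ × ℝ),
      HasDerivAt (fun t => u (t, p.2)) (fderiv ℝ u p (1, 0)) p.1 :=
    fun hu p => hasDerivAt_slice1 (hu.differentiable one_ne_zero p)
  have s2 : ∀ {u : ℝ × ℝ → ℝ} (_ : ContDiff ℝ 1 u) (p : ℝ × ℝ),
      HasDerivAt (fun t => u (p.1, t)) (fderiv ℝ u p (0, 1)) p.2 :=
    fun hu p => hasDerivAt_slice2 (hu.differentiable one_ne_zero p)
  have dX2 : ∀ p, fderiv ℝ (fun p => Φ p ^ 2 * (f p * fτ p)) p (1, 0) =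
      2 * Φ p * fderiv ℝ Φ p (1, 0) * (f p * fτ p) +
      Φ p ^ 2 * (fτ p * fτ p + f p * fderiv ℝ fτ p (1, 0)) := by
    intro p
    have := ((s1 hΦ p).pow 2).mul ((s1 hf1 p).mul (s1 hfτ p))
    rw [(s1 X2c p).unique this]
    simp [hfτdef]
  have dY2 : ∀ p, fderiv ℝ (fun p => Φ p ^ 2 * (ε^2 * (f p * fρ p))) p (0, 1) =
      2 * Φ p * fderiv ℝ Φ p (0, 1) * (ε^2 * (f p * fρ p)) +
      Φ p ^ 2 * (ε^2 * (fρ p * fρ p + f p * fderiv ℝ fρ p (0, 1))) := by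
    intro p
    have := ((s2 hΦ p).pow 2).mul (((s2 hf1 p).mul (s2 hfρ p)).const_mul (ε^2))
    rw [(s2 Y2c p).unique this]
    simp [hfρdef]
  have dX1 : ∀ p, fderiv ℝ (fun p => Φ p ^ 2 * (f p * fτ p + g p * f p ^ 2)) p (1, 0) =
      2 * Φ p * fderiv ℝ Φ p (1, 0) * (f p * fτ p + g p * f p ^ 2) +
      Φ p ^ 2 * ((fτ p * fτ p + f p * fderiv ℝ fτ p (1, 0)) +
        (fderiv ℝ g p (1, 0) * f p ^ 2 + g p * (2 * f p * fτ p))) := by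
    intro p
    have := ((s1 hΦ p).pow 2).mul (((s1 hf1 p).mul (s1 hfτ p)).add
      ((s1 hg p).mul ((s1 hf1 p).pow 2)))
    rw [(s1 X1c p).unique this]
    simp [hfτdef]
  have dY1 : ∀ p, fderiv ℝ (fun p => Φ p ^ 2 * (ε^2 * (f p * fρ p + h p * f p ^ 2))) p (0, 1) =
      2 * Φ p * fderiv ℝ Φ p (0, 1) * (ε^2 * (f p * fρ p + h p * f p ^ 2)) +
      Φ p ^ 2 * (ε^2 * ((fρ p * fρ p + f p * fderiv ℝ fρ p (0, 1)) +
        (fderiv ℝ h p (0, 1) * f p ^ 2 + h p * (2 * f p * fρ p)))) := by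
    intro p
    have := ((s2 hΦ p).pow 2).mul ((((s2 hf1 p).mul (s2 hfρ p)).add
      ((s2 hh p).mul ((s2 hf1 p).pow 2))).const_mul (ε^2))
    rw [(s2 Y1c p).unique this]
    simp [hfρdef]
  have hε2 : 0 < ε^2 := by positivity
  have I1 := core_int (P := fun p => Φ p ^ 2 * (ε^2 * f p ^ 2)) (f := f)
    (Q * ε^2 * Real.cosh (a * R)^2 + η) (cint _ (by fun_prop)) fint X1c Y1c (cΦ2 _) (cΦ2 _) ?_ ?_
  rotate_left
  · intro ρ
    have : fτ (0, ρ) = 0 := neu ρ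
    simp only [this, mul_zero, zero_add]
    have := hg0 ρ
    positivity
  · intro p hp
    rw [dX1, dY1]
    have hpde := pde p hp
    have hco := coef p hp
    have hΦp := hΦ1 p
    set A := fderiv ℝ fτ p (1, 0)
    set B := fderiv ℝ fρ p (0, 1)
    set Φτ := fderiv ℝ Φ p (1, 0)
    set Φρ := fderiv ℝ Φ p (0, 1)
    set gτ := fderiv ℝ g p (1, 0)
    set hρ := fderiv ℝ h p (0, 1)
    have key : 2 * Φ p * Φτ * (f p * fτ p + g p * f p ^ 2) +
        Φ p ^ 2 * ((fτ p * fτ p + f p * A) + (gτ * f p ^ 2 + g p * (2 * f p * fτ p))) +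
        (2 * Φ p * Φρ * (ε^2 * (f p * fρ p + h p * f p ^ 2)) +
        Φ p ^ 2 * (ε^2 * ((fρ p * fρ p + f p * B) + (hρ * f p ^ 2 + h p * (2 * f p * fρ p)))))
        = (Φ p * fτ p + Φτ * f p + g p * (Φ p * f p))^2
          + ε^2 * (Φ p * fρ p + Φρ * f p + h p * (Φ p * f p))^2
          - (Φτ^2 + ε^2 * Φρ^2) * f p ^ 2
          + (V p - lam + gτ - g p ^ 2 + ε^2 * (hρ - h p ^ 2)) * (Φ p ^ 2 * f p ^ 2) := by
      linear_combination (Φ p ^ 2 * f p) * hpde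
    rw [key]
    have t1 : 0 ≤ (Φ p * fτ p + Φτ * f p + g p * (Φ p * f p))^2 := sq_nonneg _
    have t2 : 0 ≤ ε^2 * (Φ p * fρ p + Φρ * f p + h p * (Φ p * f p))^2 := by positivity
    have t3 : (Φτ^2 + ε^2 * Φρ^2) * f p ^ 2 ≤ (2 * a^2 * ε^2 * Φ p ^ 2 + η) * f p ^ 2 := by gcongr
    have t4 := mul_le_mul_of_nonneg_right hco (by positivity : 0 ≤ Φ p ^ 2 * f p ^ 2)
    have t5 : (if |p.2| < R then ε^2 * Q else 0) * (Φ p ^ 2 * f p ^ 2) ≤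
        Q * ε^2 * Real.cosh (a * R)^2 * f p ^ 2 := by
      split_ifs with hlt
      · have c1 : Φ p ^ 2 ≤ Real.cosh (a * R)^2 := by
          refine (hΦ2 p).trans ?_
          have : Real.cosh (a * p.2) ≤ Real.cosh (a * R) := by
            rw [Real.cosh_le_cosh, abs_mul, abs_mul]
            exact mul_le_mul_of_nonneg_left (hlt.le.trans (le_abs_self R)) (abs_nonneg a)
          have := Real.cosh_pos (a * p.2)
          gcongr
        calc _ = Q * ε^2 * Φ p ^ 2 * f p ^ 2 := by ring
          _ ≤ _ := by gcongr
      · rw [zero_mul]; positivity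
    linarith
  have I2 := core_int (P := fun p => Φ p ^ 2 * (fτ p ^ 2 + ε^2 * fρ p ^ 2
      - (2 + 2 * ω + 8 * a^2) * f p ^ 2)) (f := f)
    (4 * η) (X := fun p => 2 * (Φ p ^ 2 * (f p * fτ p)))
    (Y := fun p => 2 * (Φ p ^ 2 * (ε^2 * (f p * fρ p)))) (cint _ (by fun_prop)) fint
    (contDiff_const.mul X2c) (contDiff_const.mul Y2c) ((cΦ2 _).mul_left) ((cΦ2 _).mul_left) ?_ ?_
  rotate_left
  · intro ρ
    have : fτ (0, ρ) = 0 := neu ρ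
    simp only [this, mul_zero]
    rfl
  · intro p hp
    have m1 : fderiv ℝ (fun p => 2 * (Φ p ^ 2 * (f p * fτ p))) p (1, 0) =
        2 * fderiv ℝ (fun p => Φ p ^ 2 * (f p * fτ p)) p (1, 0) := by
      rw [fderiv_const_mul (X2c.differentiable one_ne_zero p)]; rfl
    have m2 : fderiv ℝ (fun p => 2 * (Φ p ^ 2 * (ε^2 * (f p * fρ p)))) p (0, 1) =
        2 * fderiv ℝ (fun p => Φ p ^ 2 * (ε^2 * (f p * fρ p))) p (0, 1) := by
      rw [fderiv_const_mul (Y2c.differentiable one_ne_zero p)]; rfl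
    rw [m1, m2, dX2, dY2]
    have hpde := pde p hp
    have hΦp := hΦ1 p
    set A := fderiv ℝ fτ p (1, 0)
    set B := fderiv ℝ fρ p (0, 1)
    set Φτ := fderiv ℝ Φ p (1, 0)
    set Φρ := fderiv ℝ Φ p (0, 1)
    have key : 2 * (2 * Φ p * Φτ * (f p * fτ p) + Φ p ^ 2 * (fτ p * fτ p + f p * A)) +
        2 * (2 * Φ p * Φρ * (ε^2 * (f p * fρ p)) +
          Φ p ^ 2 * (ε^2 * (fρ p * fρ p + f p * B)))
        = (Φ p * fτ p + 2 * Φτ * f p)^2 + ε^2 * (Φ p * fρ p + 2 * Φρ * f p)^2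
          + Φ p ^ 2 * (fτ p ^ 2 + ε^2 * fρ p ^ 2) - 4 * ((Φτ^2 + ε^2 * Φρ^2) * f p ^ 2)
          + 2 * (V p * (Φ p ^ 2 * f p ^ 2)) - 2 * (lam * (Φ p ^ 2 * f p ^ 2)) := by
      linear_combination (2 * Φ p ^ 2 * f p) * hpde
    rw [key]
    have t1 : 0 ≤ (Φ p * fτ p + 2 * Φτ * f p)^2 := sq_nonneg _
    have t2 : 0 ≤ ε^2 * (Φ p * fρ p + 2 * Φρ * f p)^2 := by positivity
    have t0 : 2 * a^2 * ε^2 * Φ p ^ 2 ≤ 2 * a^2 * 1 * Φ p ^ 2 := by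
      have : ε^2 ≤ 1 := pow_le_one₀ hε.le hε1
      gcongr
    have t3 : (Φτ^2 + ε^2 * Φρ^2) * f p ^ 2 ≤ (2 * a^2 * 1 * Φ p ^ 2 + η) * f p ^ 2 := by
      exact mul_le_mul_of_nonneg_right (by linarith) (sq_nonneg _)
    have t4 : 0 ≤ V p * (Φ p ^ 2 * f p ^ 2) := mul_nonneg (hV p) (by positivity)
    have t5 : lam * (Φ p ^ 2 * f p ^ 2) ≤ (1 + ω) * (Φ p ^ 2 * f p ^ 2) := by gcongr
    linarith
  set M := 3 + 2 * ω + 8 * a^2 with hM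
  have hMp : 0 < M := by positivity
  have e : ∫ p in halfPlane, Φ p ^ 2 * (f p ^ 2 + (fderiv ℝ f p (1, 0))^2
      + ε^2 * (fderiv ℝ f p (0, 1))^2) =
      (M / ε^2) * (∫ p in halfPlane, Φ p ^ 2 * (ε^2 * f p ^ 2)) +
      ∫ p in halfPlane, Φ p ^ 2 * (fτ p ^ 2 + ε^2 * fρ p ^ 2
        - (2 + 2 * ω + 8 * a^2) * f p ^ 2) := by
    rw [← integral_const_mul, ← integral_add ((cint _ (by fun_prop)).const_mul _)
      (cint _ (by fun_prop))]
    congr 1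
    ext p
    simp only [hfτdef, hfρdef]
    field_simp
    rw [hM]
    ring
  rw [e]
  have I3 := mul_le_mul_of_nonneg_left I1 (by positivity : 0 ≤ M / ε^2)
  set N := ∫ p in halfPlane, f p ^ 2
  calc _ ≤ M / ε^2 * ((Q * ε^2 * Real.cosh (a * R)^2 + η) * N) + 4 * η * N := add_le_add I3 I2
    _ = _ := by field_simp; ring

theorem fatou_step (C1 N : ℝ) (E : ℕ → ℝ) (w : ℕ → ℝ × ℝ → ℝ) (W u : ℝ × ℝ → ℝ)
    (hw : ∀ n, Continuous (w n)) (hcs : ∀ n, HasCompactSupport (w n)) (hu : Continuous u)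
    (hu0 : ∀ p, 0 ≤ u p) (hlim : ∀ p, Tendsto (fun n => w n p) atTop (𝓝 (W p)))
    (hE : Tendsto E atTop (𝓝 0))
    (hn : ∀ n, ∫ p in halfPlane, w n p ^ 2 * u p ≤ (C1 + E n) * N) :
    ∫⁻ p in halfPlane, ENNReal.ofReal (W p ^ 2 * u p) ≤ ENNReal.ofReal (C1 * N) := by
  have h1 : ∀ n, ∫⁻ p in halfPlane, ENNReal.ofReal (w n p ^ 2 * u p) ≤
      ENNReal.ofReal ((C1 + E n) * N) := by
    intro n
    rw [← ofReal_integral_eq_lintegral_ofReal]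
    · exact ENNReal.ofReal_le_ofReal (hn n)
    · refine (Continuous.integrable_of_hasCompactSupport (((hw n).pow 2).mul hu) ?_).integrableOn
      refine HasCompactSupport.intro (hcs n) ?_
      intro p hp
      simp [image_eq_zero_of_notMem_tsupport hp]
    · exact Eventually.of_forall fun p => mul_nonneg (sq_nonneg _) (hu0 p)
  have h2 : ∀ p, liminf (fun n => ENNReal.ofReal (w n p ^ 2 * u p)) atTop =
      ENNReal.ofReal (W p ^ 2 * u p) := fun p =>
    (ENNReal.tendsto_ofReal (((hlim p).pow 2).mul_const _)).liminf_eq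
  have h3 : Tendsto (fun n => ENNReal.ofReal ((C1 + E n) * N)) atTop
      (𝓝 (ENNReal.ofReal (C1 * N))) := by
    have := ENNReal.tendsto_ofReal ((hE.const_add C1).mul_const N)
    simpa using this
  calc _ = ∫⁻ p in halfPlane, liminf (fun n => ENNReal.ofReal (w n p ^ 2 * u p)) atTop := by
        simp_rw [h2]
    _ ≤ liminf (fun n => ∫⁻ p in halfPlane, ENNReal.ofReal (w n p ^ 2 * u p)) atTop := by
        apply lintegral_liminf_le
        intro n
        exact (((hw n).pow 2).mul hu).measurable.ennreal_ofReal
    _ ≤ liminf (fun n => ENNReal.ofReal ((C1 + E n) * N)) atTop :=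
        liminf_le_liminf (Eventually.of_forall h1)
    _ = _ := h3.liminf_eq

theorem real_version (ω a : ℝ) (hω : 0 < ω) (ha : 0 < a) :
    ∃ B₀ C₁ : ℝ, 0 < B₀ ∧ 0 < C₁ ∧
      ∀ B : ℝ, B₀ < B → ∀ (m : ℤ) (lam : ℝ) (f : ℝ × ℝ → ℝ),
        ContDiff ℝ (⊤ : ℕ∞) f → IntegrableOn (fun p => f p ^ 2) halfPlane →
        (∀ p ∈ halfPlane, fderiv ℝ (fun q => fderiv ℝ f q ((1:ℝ), (0:ℝ))) p (1, 0)
          + B ^ (-(1:ℝ)/3) * fderiv ℝ (fun q => fderiv ℝ f q ((0:ℝ), (1:ℝ))) p (0, 1)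
          = (qPot B m p - lam) * f p) →
        (∀ ρ : ℝ, fderiv ℝ f ((0:ℝ), ρ) ((1:ℝ), (0:ℝ)) = 0) →
        lam ≤ Theta0 + ω * B ^ (-(1:ℝ)/3) →
        (∫⁻ p in halfPlane, ENNReal.ofReal (Real.cosh (a * p.2) ^ 2 *
            (f p ^ 2 + (fderiv ℝ f p ((1:ℝ), (0:ℝ))) ^ 2
              + B ^ (-(1:ℝ)/3) * (fderiv ℝ f p ((0:ℝ), (1:ℝ))) ^ 2)))
          ≤ ENNReal.ofReal (C₁ * ∫ p in halfPlane, f p ^ 2) := by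
  obtain ⟨x0, Λ, c, G, Gx, hc, hΘ, hΛ, hG, hG0, hGx, hGc⟩ := G_package
  obtain ⟨R, e0, hR, he0, hh⟩ := h_package c (ω + 2 * a^2 + 1) hc (by positivity)
  obtain ⟨χ, D, hχ, cχ, χ0, χ01, χD, hD⟩ := exists_cutoff
  set Q := ω + 2 * a^2 + 1 + 11 with hQ
  have hQp : 0 < Q := by positivity
  refine ⟨max 1 (e0 ^ (-3:ℝ)), (3 + 2 * ω + 8 * a^2) * Q * Real.cosh (a * R)^2,
    by positivity, by have := Real.cosh_pos (a * R); positivity, ?_⟩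
  intro B hB m lam f hf fint pde neu hlam
  have hB1 : 1 < B := (le_max_left _ _).trans_lt hB
  have hBe : e0 ^ (-3:ℝ) < B := (le_max_right _ _).trans_lt hB
  have hB0 : 0 < B := by linarith
  set ε := B ^ (-(1:ℝ)/6) with hεdef
  have hεsq : B ^ (-(1:ℝ)/3) = ε^2 := by
    rw [hεdef, ← Real.rpow_natCast, ← Real.rpow_mul hB0.le]; norm_num
  have hε : 0 < ε := Real.rpow_pos_of_pos hB0 _
  have hε1 : ε ≤ 1 := Real.rpow_le_one_of_one_le_of_nonpos hB1.le (by norm_num)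
  have hεe : ε^2 ≤ e0 := by
    rw [← hεsq]
    have h1 := Real.rpow_le_rpow_of_nonpos (Real.rpow_pos_of_pos he0 (-3:ℝ)) hBe.le
      (by norm_num : -(1:ℝ)/3 ≤ 0)
    rw [← Real.rpow_mul he0.le] at h1
    norm_num at h1
    convert h1 using 2
    norm_num
  rw [hεsq] at pde hlam ⊢
  have hε2 : ε^2 ≤ 1 := pow_le_one₀ hε.le hε1
  set δ := ((m : ℝ) - B / 2) / Real.sqrt B with hδ
  set ξ : ℝ → ℝ := fun ρ => δ + ε * ρ^2 / 2 with hξ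
  have hV : ∀ p, qPot B m p = (p.1 + ξ p.2)^2 := by
    intro p
    simp only [qPot, hξ, hδ, hεdef]; ring
  have ξc : ContDiff ℝ 1 ξ := by fun_prop
  have gc : ContDiff ℝ 1 (fun p : ℝ × ℝ => G (ξ p.2) (p.1 + ξ p.2)) :=
    hG.comp ((ξc.comp contDiff_snd).prodMk (contDiff_fst.add (ξc.comp contDiff_snd)))
  have hc' : ContDiff ℝ 1 (fun p : ℝ × ℝ => arctan p.2 * arctan ((ξ p.2 - x0) / ε)) := by
    refine (contDiff_arctan.comp contDiff_snd).mul (contDiff_arctan.comp ?_)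
    exact (((ξc.comp contDiff_snd).sub contDiff_const).div_const ε)
  have dg : ∀ p : ℝ × ℝ, fderiv ℝ (fun p : ℝ × ℝ => G (ξ p.2) (p.1 + ξ p.2)) p (1, 0) =
      Gx (ξ p.2) (p.1 + ξ p.2) := by
    intro p
    have h1 := hasDerivAt_slice1 (gc.differentiable one_ne_zero p)
    have h2 := (hGx (ξ p.2) (p.1 + ξ p.2)).comp_add_const p.1 (ξ p.2)
    exact h1.unique h2
  have dh : ∀ p : ℝ × ℝ, fderiv ℝ (fun p : ℝ × ℝ => arctan p.2 * arctan ((ξ p.2 - x0) / ε)) p (0, 1)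
      = arctan ((ξ p.2 - x0) / ε) / (1 + p.2^2) +
        p.2 * arctan p.2 / (1 + ((ξ p.2 - x0) / ε)^2) := by
    intro p
    have h1 := hasDerivAt_slice2 (hc'.differentiable one_ne_zero p)
    have h3 : HasDerivAt ξ (ε * p.2) p.2 := by
      have := ((((hasDerivAt_id p.2).pow 2).const_mul ε).div_const 2).const_add δ
      exact this.congr_deriv (by simp; ring)
    have h2 := (hasDerivAt_id p.2).arctan.mul (((h3.sub_const x0).div_const ε).arctan)
    rw [h1.unique h2]
    simp only [id]
    field_simp
  set η : ℕ → ℝ := fun n => 4 * D^2 / ((n:ℝ) + 1)^2 with hη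
  have hηlim : Tendsto η atTop (𝓝 0) := by
    have h1 := (tendsto_one_div_add_atTop_nhds_zero_nat (𝕜 := ℝ)).pow 2
    have h2 := h1.const_mul (4 * D^2)
    simp only [ne_eq, OfNat.ofNat_ne_zero, not_false_eq_true, zero_pow, mul_zero] at h2
    refine h2.congr fun n => ?_
    simp only [hη]
    rw [div_pow, one_pow, mul_one_div]
  have hf1 : ContDiff ℝ 1 f := hf.of_le (by exact_mod_cast le_top)
  have cτ : Continuous (fun p => fderiv ℝ f p ((1:ℝ), (0:ℝ))) :=
    (hf1.continuous_fderiv one_ne_zero).clm_apply continuous_const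
  have cρ : Continuous (fun p => fderiv ℝ f p ((0:ℝ), (1:ℝ))) :=
    (hf1.continuous_fderiv one_ne_zero).clm_apply continuous_const
  have wp := fun n : ℕ => wgt_props χ D a ((n:ℝ) + 1) hχ cχ χ01 χD
    (by have : (0:ℝ) ≤ n := Nat.cast_nonneg n
        linarith) ha
  refine fatou_step _ _ (fun n => ((3 + 2 * ω + 8 * a^2) / ε^2 + 4) * η n)
    (fun n => wgt χ a ((n:ℝ) + 1)) (fun p => Real.cosh (a * p.2))
    (fun p => f p ^ 2 + (fderiv ℝ f p ((1:ℝ), (0:ℝ))) ^ 2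
              + ε^2 * (fderiv ℝ f p ((0:ℝ), (1:ℝ))) ^ 2)
    (fun n => (wp n).1.continuous) (fun n => (wp n).2.1) ?_ ?_
    (fun p => wgt_tendsto χ a hχ.continuous χ0 p) ?_ ?_
  · have := hf1.continuous
    fun_prop
  · intro p; positivity
  · simpa using hηlim.const_mul ((3 + 2 * ω + 8 * a^2) / ε^2 + 4)
  · intro n
    refine core ε lam ω a (η n) R Q (qPot B m) f (wgt χ a ((n:ℝ) + 1)) _ _ hε hε1 hω hQp.le ha
      hf fint pde neu (wp n).1 (wp n).2.1 ?_ (wp n).2.2.1 gc hc' ?_ ?_ ?_ ?_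
    · intro p
      have h1 := (wp n).2.2.2.1 p
      have h2 := (wp n).2.2.2.2 p
      have h3 := mul_le_mul_of_nonneg_left h2 (sq_nonneg ε)
      have h4 : ε^2 * (2 * D^2 / ((n:ℝ) + 1)^2) ≤ 2 * D^2 / ((n:ℝ) + 1)^2 :=
        mul_le_of_le_one_left (by positivity) hε2
      have h5 : η n = 2 * D^2 / ((n:ℝ) + 1)^2 + 2 * D^2 / ((n:ℝ) + 1)^2 := by
        simp only [hη]; ring
      rw [h5]
      linarith
    · intro ρ
      simpa using hG0 (ξ ρ)
    · intro p hp
      rw [dg, dh, hV]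
      have h1 := hh ε ((ξ p.2 - x0) / ε) p.2 hε hεe
      have h2 := hGc (ξ p.2) (p.1 + ξ p.2)
      rw [mul_div_cancel₀ _ hε.ne'] at h1
      linarith
    · intro p; rw [hV]; positivity
    · nlinarith

theorem comp_facts (L : ℂ →L[ℝ] ℝ) (hL : ∀ (r : ℝ) (z : ℂ), L ((r:ℂ) * z) = r * L z)
    (hL1 : ∀ z, (L z) ^ 2 ≤ ‖z‖ ^ 2)
    (B : ℝ) (m : ℤ) (lam : ℝ) (ψ : ℝ × ℝ → ℂ) (h : IsQEigenfunction B m lam ψ) :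
    (∀ p v, fderiv ℝ (fun q => L (ψ q)) p v = L (fderiv ℝ ψ p v)) ∧
    ContDiff ℝ (⊤ : ℕ∞) (fun q => L (ψ q)) ∧
    IntegrableOn (fun p => (L (ψ p)) ^ 2) halfPlane ∧
    (∀ p ∈ halfPlane, fderiv ℝ (fun q => fderiv ℝ (fun q => L (ψ q)) q ((1:ℝ), (0:ℝ))) p (1, 0)
          + B ^ (-(1:ℝ)/3) *
            fderiv ℝ (fun q => fderiv ℝ (fun q => L (ψ q)) q ((0:ℝ), (1:ℝ))) p (0, 1)
          = (qPot B m p - lam) * L (ψ p)) ∧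
    (∀ ρ : ℝ, fderiv ℝ (fun q => L (ψ q)) ((0:ℝ), ρ) ((1:ℝ), (0:ℝ)) = 0) := by
  obtain ⟨hψ, i0, -, -, -, hpde, hneu⟩ := h
  have hd : ∀ {u : ℝ × ℝ → ℂ}, ContDiff ℝ 1 u → ∀ p v,
      fderiv ℝ (fun q => L (u q)) p v = L (fderiv ℝ u p v) := by
    intro u hu p v
    have := (L.hasFDerivAt.comp p (hu.differentiable one_ne_zero p).hasFDerivAt).fderiv
    change fderiv ℝ (L ∘ u) p v = _
    rw [this]; rfl
  have h1 : ContDiff ℝ 1 ψ := hψ.of_le (by exact_mod_cast le_top)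
  have h2 : ∀ v, ContDiff ℝ 1 (fun q => fderiv ℝ ψ q v) := fun v =>
    ((contDiff_infty.1 hψ 2).fderiv_right (m := 1) (by norm_num)).clm_apply contDiff_const
  refine ⟨hd h1, L.contDiff.comp hψ, ?_, ?_, ?_⟩
  · refine i0.mono' ?_ (Eventually.of_forall fun p => ?_)
    · exact ((L.continuous.comp h1.continuous).pow 2).aestronglyMeasurable
    · rw [Real.norm_of_nonneg (sq_nonneg _)]
      exact hL1 _
  · intro p hp
    simp_rw [hd h1]
    rw [hd (h2 _), hd (h2 _)]
    have := congrArg L (hpde p hp)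
    rw [map_add, map_sub, map_neg, hL, hL, hL] at this
    simp only [d2τ, d2ρ] at this
    linarith
  · intro ρ
    rw [hd h1, hneu, map_zero]

/-- Proposition 3.1: exponential localization in `ρ` of low-energy
eigenfunctions of `Q_m(B)`. -/
theorem statement8 (ω a : ℝ) (hω : 0 < ω) (ha : 0 < a) :
    ∃ B₀ C₀ : ℝ, 0 < B₀ ∧ 0 < C₀ ∧
      ∀ B : ℝ, B₀ < B → ∀ (m : ℤ) (lam : ℝ) (ψ : ℝ × ℝ → ℂ),
        IsQEigenfunction B m lam ψ →
        lam ≤ Theta0 + ω * B ^ (-(1:ℝ)/3) →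
        (∫⁻ p in halfPlane, ENNReal.ofReal (Real.exp (2 * a * |p.2|) *
            (‖ψ p‖ ^ 2 + ‖fderiv ℝ ψ p ((1:ℝ), (0:ℝ))‖ ^ 2
              + B ^ (-(1:ℝ)/3) * ‖fderiv ℝ ψ p ((0:ℝ), (1:ℝ))‖ ^ 2)))
          ≤ ENNReal.ofReal (C₀ * ∫ p in halfPlane, ‖ψ p‖ ^ 2) := by
  obtain ⟨B₀, C₁, hB₀, hC₁, H⟩ := real_version ω a hω ha
  refine ⟨B₀, 4 * C₁, hB₀, by positivity, ?_⟩
  intro B hB m lam ψ hψ hlam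
  have hn : ∀ z : ℂ, ‖z‖ ^ 2 = z.re ^ 2 + z.im ^ 2 := fun z => by
    rw [← Complex.normSq_eq_norm_sq, Complex.normSq_apply]; ring
  obtain ⟨r1, r2, r3, r4, r5⟩ := comp_facts Complex.reCLM (by simp)
    (fun z => by rw [hn]; simp; positivity) B m lam ψ hψ
  obtain ⟨s1, s2, s3, s4, s5⟩ := comp_facts Complex.imCLM (by simp)
    (fun z => by rw [hn]; simp; positivity) B m lam ψ hψ
  have Hr := H B hB m lam _ r2 r3 r4 r5 hlam
  have Hi := H B hB m lam _ s2 s3 s4 s5 hlam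
  simp only [r1, s1] at Hr Hi
  simp only [Complex.reCLM_apply, Complex.imCLM_apply] at Hr Hi r3 s3
  have hB0 : 0 < B := hB₀.trans hB
  set b := B ^ (-(1:ℝ)/3) with hb
  have hbp : 0 < b := Real.rpow_pos_of_pos hB0 _
  have h1 : ContDiff ℝ 1 ψ := hψ.1.of_le (by exact_mod_cast le_top)
  have cψ := h1.continuous
  have cd : ∀ v, Continuous (fun p => fderiv ℝ ψ p v) := fun v =>
    (h1.continuous_fderiv one_ne_zero).clm_apply continuous_const
  have c1 := cd (1, 0)
  have c2 := cd (0, 1)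
  have hI : ∫ p in halfPlane, ‖ψ p‖ ^ 2 =
      (∫ p in halfPlane, (ψ p).re ^ 2) + ∫ p in halfPlane, (ψ p).im ^ 2 := by
    rw [← integral_add r3 s3]
    simp_rw [hn]
  have hexp : ∀ y : ℝ, Real.exp (2 * a * |y|) ≤ 4 * Real.cosh (a * y) ^ 2 := by
    intro y
    have e1 : Real.cosh (a * y) = Real.cosh (a * |y|) := by
      rw [← Real.cosh_abs (a * y), abs_mul, abs_of_pos ha]
    have e2 : Real.exp (2 * a * |y|) = Real.exp (a * |y|) ^ 2 := by
      rw [← Real.exp_nat_mul]; congr 1; push_cast; ring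
    have e3 : Real.exp (a * |y|) ≤ 2 * Real.cosh (a * |y|) := by
      rw [Real.cosh_eq]
      have := Real.exp_pos (-(a * |y|))
      linarith
    rw [e1, e2]
    calc _ ≤ (2 * Real.cosh (a * |y|)) ^ 2 := by
          have := Real.exp_pos (a * |y|)
          gcongr
      _ = _ := by ring
  set ur : ℝ × ℝ → ℝ := fun p => Real.cosh (a * p.2) ^ 2 * ((ψ p).re ^ 2
    + (fderiv ℝ ψ p ((1:ℝ), (0:ℝ))).re ^ 2 + b * (fderiv ℝ ψ p ((0:ℝ), (1:ℝ))).re ^ 2) with hur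
  set ui : ℝ × ℝ → ℝ := fun p => Real.cosh (a * p.2) ^ 2 * ((ψ p).im ^ 2
    + (fderiv ℝ ψ p ((1:ℝ), (0:ℝ))).im ^ 2 + b * (fderiv ℝ ψ p ((0:ℝ), (1:ℝ))).im ^ 2) with hui
  have ur0 : ∀ p, 0 ≤ ur p := fun p => by positivity
  have ui0 : ∀ p, 0 ≤ ui p := fun p => by positivity
  have urc : Continuous ur := by
    have := Complex.continuous_re.comp cψ
    have := Complex.continuous_re.comp c1
    have := Complex.continuous_re.comp c2
    have := Real.continuous_cosh.comp (continuous_const.mul continuous_snd : Continuous fun p : ℝ × ℝ => a * p.2)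
    simp only [Function.comp_def] at *
    fun_prop
  calc _ ≤ ∫⁻ p in halfPlane, ENNReal.ofReal 4 * (ENNReal.ofReal (ur p) + ENNReal.ofReal (ui p)) := by
        refine lintegral_mono fun p => ?_
        rw [← ENNReal.ofReal_add (ur0 p) (ui0 p), ← ENNReal.ofReal_mul (by norm_num)]
        apply ENNReal.ofReal_le_ofReal
        have := mul_le_mul_of_nonneg_right (hexp p.2) (by positivity :
          0 ≤ ‖ψ p‖ ^ 2 + ‖fderiv ℝ ψ p ((1:ℝ), (0:ℝ))‖ ^ 2
              + b * ‖fderiv ℝ ψ p ((0:ℝ), (1:ℝ))‖ ^ 2)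
        refine this.trans (le_of_eq ?_)
        simp only [hn, hur, hui]
        ring
    _ = ENNReal.ofReal 4 * ((∫⁻ p in halfPlane, ENNReal.ofReal (ur p)) +
          ∫⁻ p in halfPlane, ENNReal.ofReal (ui p)) := by
        rw [lintegral_const_mul' _ _ ENNReal.ofReal_ne_top,
          lintegral_add_left urc.measurable.ennreal_ofReal]
    _ ≤ ENNReal.ofReal 4 * (ENNReal.ofReal (C₁ * ∫ p in halfPlane, (ψ p).re ^ 2) +
          ENNReal.ofReal (C₁ * ∫ p in halfPlane, (ψ p).im ^ 2)) := by gcongr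
    _ = _ := by
        have n1 : 0 ≤ ∫ p in halfPlane, (ψ p).re ^ 2 := integral_nonneg fun p => sq_nonneg _
        have n2 : 0 ≤ ∫ p in halfPlane, (ψ p).im ^ 2 := integral_nonneg fun p => sq_nonneg _
        rw [← ENNReal.ofReal_add (by positivity) (by positivity),
          ← ENNReal.ofReal_mul (by norm_num), hI]
        congr 1
        ring
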